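/- Let n ≥ 11 and let G be a minimizer graph of 𝔾_{n,3}, i.e., a connected simple graph on n vertices with domination number 3 whose spectral radius is minimum among all such graphs. Then there exists an integer a with 1 ≤ a and 2a + 7 ≤ n such that G is isomorphic to G_2(a, n − 2a − 7, a). -/

import Mathlib

open SimpleGraph

/-- Adjacency matrix of a simple graph over ℝ. -/
noncomputable def adjMat {V : Type*} (G : SimpleGraph V) : Matrix V V ℝ :=
  Matrix.of fun i j => @ite ℝ (G.Adj i j) (Classical.propDecidable _) 1 0

/-- Spectral radius: the largest eigenvalue (supremum of the real spectrum)
of the adjacency matrix. -/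
noncomputable def specRad {V : Type*} [Fintype V] [DecidableEq V]
    (G : SimpleGraph V) : ℝ :=
  sSup (spectrum ℝ (adjMat G))

/-- `D` is a dominating set of `G`. -/
def IsDomSet {V : Type*} (G : SimpleGraph V) (D : Finset V) : Prop :=
  ∀ v ∉ D, ∃ u ∈ D, G.Adj u v

/-- The domination number of `G`. -/
noncomputable def domNum {V : Type*} [Fintype V] (G : SimpleGraph V) : ℕ :=
  sInf {k | ∃ D : Finset V, IsDomSet G D ∧ D.card = k}

/-- The tree `G₂(a,b,c)`: the path v1 v4 v5 v2 v6 v7 v3 (vertices `Sum.inl 0, …, Sum.inl 6`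
in path order), with `a` pendant edges at v1, `b` pendant edges at v2 and `c` pendant
edges at v3. -/
def G2graph (a b c : ℕ) : SimpleGraph (Fin 7 ⊕ (Fin a ⊕ Fin b ⊕ Fin c)) :=
  SimpleGraph.fromRel (fun x y =>
    (x = Sum.inl 0 ∧ y = Sum.inl 1) ∨
    (x = Sum.inl 1 ∧ y = Sum.inl 2) ∨
    (x = Sum.inl 2 ∧ y = Sum.inl 3) ∨
    (x = Sum.inl 3 ∧ y = Sum.inl 4) ∨
    (x = Sum.inl 4 ∧ y = Sum.inl 5) ∨
    (x = Sum.inl 5 ∧ y = Sum.inl 6) ∨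
    (∃ j : Fin a, x = Sum.inl 0 ∧ y = Sum.inr (Sum.inl j)) ∨
    (∃ j : Fin b, x = Sum.inl 3 ∧ y = Sum.inr (Sum.inr (Sum.inl j))) ∨
    (∃ j : Fin c, x = Sum.inl 6 ∧ y = Sum.inr (Sum.inr (Sum.inr j))))


open Matrix

theorem adjMat_apply' {V : Type*} (G : SimpleGraph V) (i j : V) [Decidable (G.Adj i j)] :
    adjMat G i j = if G.Adj i j then 1 else 0 := by
  simp only [adjMat, Matrix.of_apply]
  congr

theorem adjMat_nonneg {V : Type*} (G : SimpleGraph V) (i j : V) : 0 ≤ adjMat G i j := by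
  classical
  rw [adjMat_apply']
  split_ifs <;> norm_num

theorem adjMat_symm {V : Type*} (G : SimpleGraph V) (i j : V) :
    adjMat G i j = adjMat G j i := by
  classical
  rw [adjMat_apply', adjMat_apply']
  simp only [G.adj_comm]

theorem adjMat_herm {V : Type*} [Fintype V] [DecidableEq V] (G : SimpleGraph V) :
    (adjMat G).IsHermitian := by
  ext i j
  simp [Matrix.conjTranspose_apply, adjMat_symm G i j]

/-- Existence of a positive Perron vector for the spectral radius of a connected graph. -/
theorem exists_perron {V : Type*} [Fintype V] [DecidableEq V] (G : SimpleGraph V)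
    (hG : G.Connected) :
    ∃ x : V → ℝ, (∀ v, 0 < x v) ∧ ∀ v, ∑ w, adjMat G v w * x w = specRad G * x v := by
  classical
  have hne : Nonempty V := hG.nonempty
  have hA := adjMat_herm G
  set A := adjMat G with hAdef
  have hspec : spectrum ℝ A = Set.range hA.eigenvalues :=
    hA.spectrum_real_eq_range_eigenvalues
  have hfin : (spectrum ℝ A).Finite := by rw [hspec]; exact Set.finite_range _
  have hnon : (spectrum ℝ A).Nonempty := by rw [hspec]; exact Set.range_nonempty _
  have hmem : specRad G ∈ spectrum ℝ A := hnon.csSup_mem hfin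
  have hle : ∀ μ ∈ spectrum ℝ A, μ ≤ specRad G := fun μ h => le_csSup hfin.bddAbove h
  set ρ := specRad G with hρ
  rw [hspec] at hmem
  obtain ⟨i, hi⟩ := hmem
  have hev := hA.mulVec_eigenvectorBasis i
  rw [hi] at hev
  set v : V → ℝ := ⇑(hA.eigenvectorBasis i) with hv
  have hv0 : v ≠ 0 := by
    intro h0
    have := hA.eigenvectorBasis.orthonormal.ne_zero i
    apply this
    ext j
    exact congrFun h0 j
  have hpsd : (algebraMap ℝ (Matrix V V ℝ) ρ - A).PosSemidef := by
    rw [Matrix.posSemidef_iff_isHermitian_and_spectrum_nonneg]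
    constructor
    · apply Matrix.IsHermitian.sub _ hA
      rw [Matrix.algebraMap_eq_diagonal]
      exact Matrix.isHermitian_diagonal _
    · intro z hz
      rw [← spectrum.singleton_sub_eq] at hz
      obtain ⟨r, hr, m, hm, rfl⟩ := hz
      rw [Set.mem_singleton_iff] at hr
      subst hr
      simpa using hle m hm
  set x : V → ℝ := fun j => |v j| with hx
  have hquad : ∀ y : V → ℝ, y ⬝ᵥ ((algebraMap ℝ (Matrix V V ℝ) ρ - A) *ᵥ y)
      = ρ * (y ⬝ᵥ y) - y ⬝ᵥ (A *ᵥ y) := by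
    intro y
    rw [Matrix.sub_mulVec, dotProduct_sub, Algebra.algebraMap_eq_smul_one, Matrix.smul_mulVec,
      Matrix.one_mulVec, dotProduct_smul, smul_eq_mul]
  have hxx : x ⬝ᵥ x = v ⬝ᵥ v := by
    simp [dotProduct, hx]
  have hxA : v ⬝ᵥ (A *ᵥ v) ≤ x ⬝ᵥ (A *ᵥ x) := by
    simp only [dotProduct, Matrix.mulVec]
    apply Finset.sum_le_sum
    intro j _
    rw [Finset.mul_sum, Finset.mul_sum]
    apply Finset.sum_le_sum
    intro k _
    have h1 : 0 ≤ A j k := adjMat_nonneg G j k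
    calc v j * (A j k * v k) ≤ |v j * (A j k * v k)| := le_abs_self _
      _ = x j * (A j k * x k) := by rw [abs_mul, abs_mul, abs_of_nonneg h1]
  have hvA : v ⬝ᵥ (A *ᵥ v) = ρ * (v ⬝ᵥ v) := by
    rw [hev, dotProduct_smul, smul_eq_mul]
  have hge : 0 ≤ x ⬝ᵥ ((algebraMap ℝ (Matrix V V ℝ) ρ - A) *ᵥ x) := by
    simpa using hpsd.dotProduct_mulVec_nonneg x
  have hzero : x ⬝ᵥ ((algebraMap ℝ (Matrix V V ℝ) ρ - A) *ᵥ x) = 0 := by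
    rw [hquad] at hge ⊢
    rw [hxx] at *
    linarith
  have hker : (algebraMap ℝ (Matrix V V ℝ) ρ - A) *ᵥ x = 0 := by
    have := (hpsd.dotProduct_mulVec_zero_iff x).1
    apply this
    simpa using hzero
  have heig : ∀ j, ∑ w, A j w * x w = ρ * x j := by
    intro j
    have h := congrFun hker j
    rw [Matrix.sub_mulVec, Algebra.algebraMap_eq_smul_one, Matrix.smul_mulVec,
      Matrix.one_mulVec] at h
    simp only [Pi.sub_apply, Pi.smul_apply, smul_eq_mul, Pi.zero_apply, Matrix.mulVec,
      dotProduct] at h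
    linarith
  refine ⟨x, ?_, heig⟩
  have hx0 : ∀ j, 0 ≤ x j := fun j => abs_nonneg _
  by_contra hcon
  push Not at hcon
  obtain ⟨j0, hj0⟩ := hcon
  have hprop : ∀ j k, G.Adj j k → x j = 0 → x k = 0 := by
    intro j k hjk hj
    have h := heig j
    rw [hj, mul_zero] at h
    have h2 := (Finset.sum_eq_zero_iff_of_nonneg
      (fun w _ => mul_nonneg (adjMat_nonneg G j w) (hx0 w))).1 h k (Finset.mem_univ _)
    rw [adjMat_apply', if_pos hjk, one_mul] at h2
    exact h2
  have hall : ∀ j, x j = 0 := by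
    intro j
    obtain ⟨p⟩ := hG.preconnected j0 j
    have h0 : x j0 = 0 := le_antisymm hj0 (hx0 _)
    clear hj0
    induction p with
    | nil => exact h0
    | cons hadj _ ih => exact ih (hprop _ _ hadj h0)
  apply hv0
  ext j
  exact abs_eq_zero.1 (hall j)

/-- Comparison: a positive super-solution bounds the spectral radius strictly. -/
theorem specRad_lt {V : Type*} [Fintype V] [DecidableEq V] (H : SimpleGraph V)
    (hH : H.Connected) (lam : ℝ) (y : V → ℝ) (hy : ∀ v, 0 < y v)
    (hle : ∀ v, ∑ w, adjMat H v w * y w ≤ lam * y v)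
    (hlt : ∃ v, ∑ w, adjMat H v w * y w < lam * y v) : specRad H < lam := by
  obtain ⟨z, hz, hzeq⟩ := exists_perron H hH
  have h1 : ∑ v, z v * ∑ w, adjMat H v w * y w < ∑ v, z v * (lam * y v) := by
    obtain ⟨v0, hv0⟩ := hlt
    exact Finset.sum_lt_sum (fun v _ => mul_le_mul_of_nonneg_left (hle v) (hz v).le)
      ⟨v0, Finset.mem_univ _, mul_lt_mul_of_pos_left hv0 (hz v0)⟩
  have h2 : ∑ v, z v * ∑ w, adjMat H v w * y w = ∑ w, y w * ∑ v, adjMat H w v * z v := by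
    simp only [Finset.mul_sum]
    rw [Finset.sum_comm]
    refine Finset.sum_congr rfl fun w _ => Finset.sum_congr rfl fun v _ => ?_
    rw [adjMat_symm H w v]
    ring
  rw [h2] at h1
  simp only [hzeq] at h1
  have h3 : ∑ w, y w * (specRad H * z w) = specRad H * ∑ w, y w * z w := by
    rw [Finset.mul_sum]; exact Finset.sum_congr rfl fun _ _ => by ring
  have h4 : ∑ w, z w * (lam * y w) = lam * ∑ w, y w * z w := by
    rw [Finset.mul_sum]; exact Finset.sum_congr rfl fun _ _ => by ring
  rw [h3, h4] at h1
  exact lt_of_mul_lt_mul_right h1 (Finset.sum_nonneg fun w _ => (mul_pos (hy w) (hz w)).le)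

/-- Strict monotonicity under deleting edges. -/
theorem specRad_lt_of_lt {V : Type*} [Fintype V] [DecidableEq V] (H G : SimpleGraph V)
    (hH : H.Connected) (hlt : H < G) : specRad H < specRad G := by
  classical
  have hG : G.Connected := hH.mono hlt.le
  obtain ⟨x, hx, hxeq⟩ := exists_perron G hG
  have hle : ∀ v w, adjMat H v w * x w ≤ adjMat G v w * x w := by
    intro v w
    apply mul_le_mul_of_nonneg_right _ (hx w).le
    rw [adjMat_apply', adjMat_apply']
    by_cases h : H.Adj v w
    · simp [h, hlt.le h]
    · simp only [h, if_false]; split_ifs <;> norm_num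
  have hex : ∃ v w, G.Adj v w ∧ ¬ H.Adj v w := by
    by_contra hcon
    push Not at hcon
    exact hlt.not_ge (fun v w h => hcon v w h)
  obtain ⟨v, w, hvw, hnvw⟩ := hex
  refine specRad_lt H hH _ x hx (fun u => ?_) ⟨v, ?_⟩
  · rw [← hxeq]; exact Finset.sum_le_sum fun w _ => hle u w
  · rw [← hxeq]
    refine Finset.sum_lt_sum (fun w _ => hle v w) ⟨w, Finset.mem_univ _, ?_⟩
    rw [adjMat_apply', adjMat_apply', if_pos hvw, if_neg hnvw]
    simpa using hx w

theorem specRad_iso {V W : Type*} [Fintype V] [DecidableEq V] [Fintype W] [DecidableEq W]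
    (G : SimpleGraph V) (H : SimpleGraph W) (e : G ≃g H) : specRad G = specRad H := by
  classical
  have h : adjMat H = Matrix.reindexAlgEquiv ℝ ℝ e.toEquiv (adjMat G) := by
    ext i j
    rw [Matrix.coe_reindexAlgEquiv, Matrix.reindex_apply, Matrix.submatrix_apply,
      adjMat_apply', adjMat_apply']
    have : H.Adj i j ↔ G.Adj (e.toEquiv.symm i) (e.toEquiv.symm j) :=
      (e.symm.map_adj_iff (v := i) (w := j)).symm
    simp only [this]
  rw [specRad, specRad, h, AlgEquiv.spectrum_eq]

theorem domNum_eq_three {V : Type*} [Fintype V] (G : SimpleGraph V) (D : Finset V)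
    (hD : IsDomSet G D) (hc : D.card = 3) (hmin : ∀ D', IsDomSet G D' → 3 ≤ D'.card) :
    domNum G = 3 := by
  apply le_antisymm
  · exact Nat.sInf_le ⟨D, hD, hc⟩
  · refine le_csInf (s := {k | ∃ D : Finset V, IsDomSet G D ∧ D.card = k}) ⟨3, D, hD, hc⟩ ?_
    rintro k ⟨D', h1, rfl⟩
    exact hmin D' h1

theorem domNum_three_spec {V : Type*} [Fintype V] (G : SimpleGraph V) (h : domNum G = 3) :
    (∃ D : Finset V, IsDomSet G D ∧ D.card = 3) ∧ ∀ D', IsDomSet G D' → 3 ≤ D'.card := by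
  constructor
  · have : domNum G ∈ {k | ∃ D : Finset V, IsDomSet G D ∧ D.card = k} :=
      Nat.sInf_mem ⟨_, Finset.univ, fun v hv => absurd (Finset.mem_univ v) hv, rfl⟩
    rw [h] at this
    exact this
  · intro D' hD'
    rw [← h]
    exact Nat.sInf_le ⟨D', hD', rfl⟩

theorem domNum_iso {V W : Type*} [Fintype V] [Fintype W]
    (G : SimpleGraph V) (H : SimpleGraph W) (e : G ≃g H) : domNum G = domNum H := by
  have key : ∀ {V W : Type _} [Fintype V] [Fintype W]
    (G : SimpleGraph V) (H : SimpleGraph W) (e : G ≃g H) (D : Finset V), IsDomSet G D →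
      IsDomSet H (D.map e.toEquiv.toEmbedding) := by
    intro V W _ _ G H e D hD w hw
    have : e.symm w ∉ D := by
      intro h
      apply hw
      rw [Finset.mem_map]
      exact ⟨_, h, e.apply_symm_apply w⟩
    obtain ⟨u, hu, hadj⟩ := hD _ this
    refine ⟨e u, Finset.mem_map.2 ⟨u, hu, rfl⟩, ?_⟩
    have := e.map_adj_iff.2 hadj
    rwa [e.apply_symm_apply] at this
  unfold domNum
  congr 1
  ext k
  constructor
  · rintro ⟨D, hD, rfl⟩
    exact ⟨_, key G H e D hD, Finset.card_map _⟩
  · rintro ⟨D, hD, rfl⟩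
    refine ⟨_, ?_, Finset.card_map e.symm.toEquiv.toEmbedding⟩
    intro w hw
    have : e w ∉ D := by
      intro h
      apply hw
      rw [Finset.mem_map]
      exact ⟨_, h, e.symm_apply_apply w⟩
    obtain ⟨u, hu, hadj⟩ := hD _ this
    refine ⟨e.symm u, Finset.mem_map.2 ⟨u, hu, rfl⟩, ?_⟩
    have := e.symm.map_adj_iff.2 hadj
    rwa [e.symm_apply_apply] at this

/-- The test vector on `G₂(a,b,c)`. -/
noncomputable def testVec (lam : ℝ) (a b c : ℕ) : Fin 7 ⊕ (Fin a ⊕ Fin b ⊕ Fin c) → ℝ :=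
  let t := lam ^ 2
  let qa := (t - 1) * (t - 1 - a) - 1
  let qc := (t - 1) * (t - 1 - c) - 1
  Sum.elim ![lam / qa, (t - a) / qa, lam * (t - 1 - a) / qa, 1,
      lam * (t - 1 - c) / qc, (t - c) / qc, lam / qc]
    (Sum.elim (fun _ => 1 / qa) (Sum.elim (fun _ => 1 / lam) (fun _ => 1 / qc)))

theorem G2_connected (a b c : ℕ) : (G2graph a b c).Connected := by
  rw [connected_iff_exists_forall_reachable]
  refine ⟨Sum.inl 3, ?_⟩
  have h01 : (G2graph a b c).Adj (Sum.inl 0) (Sum.inl 1) := by simp [G2graph]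
  have h12 : (G2graph a b c).Adj (Sum.inl 1) (Sum.inl 2) := by simp [G2graph]
  have h23 : (G2graph a b c).Adj (Sum.inl 2) (Sum.inl 3) := by simp [G2graph]
  have h34 : (G2graph a b c).Adj (Sum.inl 3) (Sum.inl 4) := by simp [G2graph]
  have h45 : (G2graph a b c).Adj (Sum.inl 4) (Sum.inl 5) := by simp [G2graph]
  have h56 : (G2graph a b c).Adj (Sum.inl 5) (Sum.inl 6) := by simp [G2graph]
  have r2 := h23.reachable.symm
  have r1 := r2.trans h12.reachable.symm
  have r0 := r1.trans h01.reachable.symm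
  have r4 := h34.reachable
  have r5 := r4.trans h45.reachable
  have r6 := r5.trans h56.reachable
  rintro (i | j | j | j)
  · fin_cases i
    · exact r0
    · exact r1
    · exact r2
    · exact Reachable.refl _
    · exact r4
    · exact r5
    · exact r6
  · exact r0.trans (Adj.reachable (by simp [G2graph]))
  · exact (Adj.reachable (by simp [G2graph]))
  · exact r6.trans (Adj.reachable (by simp [G2graph]))

theorem card_ge_three_of_packing {V : Type*} [Fintype V] [DecidableEq V] (G : SimpleGraph V)
    (D : Finset V) (hD : IsDomSet G D) (x y z : V)
    (hxy : ∀ w, ¬ ((w = x ∨ G.Adj w x) ∧ (w = y ∨ G.Adj w y)))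
    (hxz : ∀ w, ¬ ((w = x ∨ G.Adj w x) ∧ (w = z ∨ G.Adj w z)))
    (hyz : ∀ w, ¬ ((w = y ∨ G.Adj w y) ∧ (w = z ∨ G.Adj w z))) : 3 ≤ D.card := by
  have key : ∀ v, ∃ u ∈ D, (u = v ∨ G.Adj u v) := by
    intro v
    by_cases h : v ∈ D
    · exact ⟨v, h, Or.inl rfl⟩
    · obtain ⟨u, hu, h⟩ := hD v h
      exact ⟨u, hu, Or.inr h⟩
  obtain ⟨u1, h1, k1⟩ := key x
  obtain ⟨u2, h2, k2⟩ := key y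
  obtain ⟨u3, h3, k3⟩ := key z
  have h12 : u1 ≠ u2 := by rintro rfl; exact hxy _ ⟨k1, k2⟩
  have h13 : u1 ≠ u3 := by rintro rfl; exact hxz _ ⟨k1, k3⟩
  have h23 : u2 ≠ u3 := by rintro rfl; exact hyz _ ⟨k2, k3⟩
  have : ({u1, u2, u3} : Finset V).card = 3 := Finset.card_eq_three.2 ⟨u1, u2, u3, h12, h13, h23, rfl⟩
  rw [← this]
  apply Finset.card_le_card
  intro w hw
  simp only [Finset.mem_insert, Finset.mem_singleton] at hw
  rcases hw with rfl | rfl | rfl <;> assumption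

theorem G2_domNum (a b c : ℕ) : domNum (G2graph a b c) = 3 := by
  classical
  apply domNum_eq_three _ {Sum.inl 0, Sum.inl 3, Sum.inl 6}
  · rintro (i | j | j | j) hv
    · fin_cases i
      · simp at hv
      · exact ⟨Sum.inl 0, by simp, by simp [G2graph]⟩
      · exact ⟨Sum.inl 3, by simp, by simp [G2graph]⟩
      · simp at hv
      · exact ⟨Sum.inl 3, by simp, by simp [G2graph]⟩
      · exact ⟨Sum.inl 6, by simp, by simp [G2graph]⟩
      · simp at hv
    · exact ⟨Sum.inl 0, by simp, by simp [G2graph]⟩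
    · exact ⟨Sum.inl 3, by simp, by simp [G2graph]⟩
    · exact ⟨Sum.inl 6, by simp, by simp [G2graph]⟩
  · rw [Finset.card_eq_three]
    exact ⟨_, _, _, by simp, by simp, by simp, rfl⟩
  · intro D hD
    apply card_ge_three_of_packing _ D hD (Sum.inl 0) (Sum.inl 3) (Sum.inl 6)
    all_goals
      rintro (i | j | j | j)
      · fin_cases i <;> simp [G2graph]
      · simp [G2graph]
      · simp [G2graph]
      · simp [G2graph]

theorem G2_specRad_lt (a b c : ℕ) (lam s : ℝ) (hl : 0 < lam) (hs : 0 < s) (hls : lam ^ 2 = s + 1)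
    (hqa : 0 < s * (s - a) - 1) (hqc : 0 < s * (s - c) - 1)
    (h : (s + 1) * (s - a) / (s * (s - a) - 1) + (s + 1) * (s - c) / (s * (s - c) - 1)
      < s + 1 - b) : specRad (G2graph a b c) < lam := by
  classical
  have e1 : lam ^ 2 - 1 = s := by linarith
  have ha : 0 < s - a := by
    by_contra hc
    nlinarith
  have hc : 0 < s - c := by
    by_contra hc
    nlinarith
  have hqa' := hqa.ne'
  have hqc' := hqc.ne'
  have hl' := hl.ne'
  have hstrict : ∑ w, adjMat (G2graph a b c) (Sum.inl 3) w * testVec lam a b c w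
      < lam * testVec lam a b c (Sum.inl 3) := by
    have : lam * (s - a) / (s * (s - a) - 1) + lam * (s - c) / (s * (s - c) - 1) + b * (1 / lam)
        < lam := by
      have h2 : lam * (lam * (s - a) / (s * (s - a) - 1) + lam * (s - c) / (s * (s - c) - 1)
          + b * (1 / lam)) = (s + 1) * (s - a) / (s * (s - a) - 1)
          + (s + 1) * (s - c) / (s * (s - c) - 1) + b := by
        rw [← hls]; field_simp
      have h3 : lam * (lam * (s - a) / (s * (s - a) - 1) + lam * (s - c) / (s * (s - c) - 1)
          + b * (1 / lam)) < lam * lam := by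
        rw [h2, ← sq, hls]; linarith
      exact lt_of_mul_lt_mul_left h3 hl.le
    simp [adjMat_apply', G2graph, testVec, e1, Fintype.sum_sum_type, Fin.sum_univ_seven]
    simp at this
    linarith
  have heq : ∀ v, v ≠ Sum.inl 3 → ∑ w, adjMat (G2graph a b c) v w * testVec lam a b c w
      = lam * testVec lam a b c v := by
    rintro (i | j | j | j) hv
    · fin_cases i
      · simp [adjMat_apply', G2graph, testVec, e1, Fintype.sum_sum_type, Fin.sum_univ_seven]
        field_simp
        ring
      · simp [adjMat_apply', G2graph, testVec, e1, Fintype.sum_sum_type, Fin.sum_univ_seven]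
        field_simp
        rw [hls]; ring
      · simp [adjMat_apply', G2graph, testVec, e1, Fintype.sum_sum_type, Fin.sum_univ_seven]
        field_simp
        rw [hls]; ring
      · simp at hv
      · simp [adjMat_apply', G2graph, testVec, e1, Fintype.sum_sum_type, Fin.sum_univ_seven]
        field_simp
        rw [hls]; ring
      · simp [adjMat_apply', G2graph, testVec, e1, Fintype.sum_sum_type, Fin.sum_univ_seven]
        field_simp
        rw [hls]; ring
      · simp [adjMat_apply', G2graph, testVec, e1, Fintype.sum_sum_type, Fin.sum_univ_seven]
        field_simp
        ring
    · simp [adjMat_apply', G2graph, testVec, e1, Fintype.sum_sum_type, Fin.sum_univ_seven]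
      field_simp
    · simp [adjMat_apply', G2graph, testVec, e1, Fintype.sum_sum_type, Fin.sum_univ_seven]
      field_simp
    · simp [adjMat_apply', G2graph, testVec, e1, Fintype.sum_sum_type, Fin.sum_univ_seven]
      field_simp
  apply specRad_lt _ (G2_connected a b c) lam (testVec lam a b c)
  · rintro (i | j | j | j)
    · fin_cases i <;> simp [testVec, e1] <;> first | positivity | skip
      · apply div_pos _ hqa; nlinarith
      · apply div_pos _ hqc; nlinarith
    · simp [testVec, e1, hqa]
    · simp [testVec, hl]
    · simp [testVec, e1, hqc]
  · intro v
    by_cases hv : v = Sum.inl 3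
    · rw [hv]; exact hstrict.le
    · exact (heq v hv).le
  · exact ⟨_, hstrict⟩

/-- `q_a = s (s - a) - 1`. -/
noncomputable def Qf (s : ℝ) (a : ℕ) : ℝ := s * (s - a) - 1

/-- Contribution of a branch of length three. -/
noncomputable def K3 (s : ℝ) (a : ℕ) : ℝ := (s + 1) * (s - a) / (s * (s - a) - 1)

/-- The condition that certifies that `G₂(a,b,c)` has spectral radius squared less than `s + 1`. -/
def UC (s : ℝ) (a b c : ℕ) : Prop := 0 < Qf s a ∧ 0 < Qf s c ∧ K3 s a + K3 s c < s + 1 - b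

theorem K3_eq (s : ℝ) (hs : 0 < s) (a : ℕ) (hq : 0 < Qf s a) :
    K3 s a = (1 + 1 / s) * (1 + 1 / Qf s a) := by
  unfold K3
  unfold Qf at *
  have := hq.ne'
  field_simp
  ring

theorem Qf_succ (s : ℝ) (a : ℕ) : Qf s a = Qf s (a + 1) + s := by
  unfold Qf; push_cast; ring

theorem lt_of_Qf (s : ℝ) (hs : 0 < s) (a : ℕ) (hq : 0 < Qf s a) : (a : ℝ) < s := by
  unfold Qf at hq
  by_contra hc
  nlinarith

theorem K3_diff (s : ℝ) (hs : 0 < s) (a : ℕ) (hq : 0 < Qf s (a + 1)) :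
    K3 s (a + 1) - K3 s a = (s + 1) / (Qf s (a + 1) * Qf s a) := by
  have h := Qf_succ s a
  have h0 : 0 < Qf s a := by linarith
  rw [K3_eq s hs a h0, K3_eq s hs _ hq]
  rw [h]
  have : Qf s (a + 1) + s ≠ 0 := by linarith
  have := hq.ne'
  field_simp
  ring

theorem Qf_mono (s : ℝ) (hs : 0 < s) (a c : ℕ) (h : c ≤ a) : Qf s a ≤ Qf s c := by
  unfold Qf
  have : (c : ℝ) ≤ a := by exact_mod_cast h
  nlinarith

theorem num_wlog (s : ℝ) (hs : 0 < s) (a b c : ℕ) (hsum : 4 ≤ a + b + c) (hac : c ≤ a)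
    (hqa : 0 < Qf s a) (h : K3 s a + K3 s c ≤ s + 1 - b)
    (hmin : ∀ a' b' c', a' + b' + c' = a + b + c → ¬ UC s a' b' c') :
    a = c ∧ 1 ≤ a ∧ K3 s a + K3 s c = s + 1 - b := by
  have hqc : 0 < Qf s c := lt_of_lt_of_le hqa (Qf_mono s hs a c hac)
  have heq : K3 s a + K3 s c = s + 1 - b := by
    rcases h.lt_or_eq with h1 | h1
    · exact absurd ⟨hqa, hqc, h1⟩ (hmin a b c rfl)
    · exact h1
  have has := lt_of_Qf s hs a hqa
  rcases Nat.lt_or_ge (c + 1) a with h2 | h2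
  · exfalso
    obtain ⟨a, rfl⟩ : ∃ a0, a = a0 + 1 := ⟨a - 1, by omega⟩
    have hq1 : Qf s (a + 1) < Qf s a := by rw [Qf_succ s a]; linarith
    have hq2 : Qf s a ≤ Qf s (c + 1) := Qf_mono s hs _ _ (by omega)
    have hq3 : Qf s (c + 1) < Qf s c := by rw [Qf_succ s c]; linarith
    have d1 := K3_diff s hs a hqa
    have d2 := K3_diff s hs c (by linarith)
    have : (s + 1) / (Qf s (c + 1) * Qf s c) < (s + 1) / (Qf s (a + 1) * Qf s a) := by
      apply div_lt_div_of_pos_left (by linarith)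
      · apply mul_pos <;> linarith
      · apply mul_lt_mul <;> linarith
    exact hmin a b (c + 1) (by omega) ⟨by linarith, by linarith, by linarith⟩
  rcases Nat.lt_or_ge c a with h3 | h3
  · exfalso
    obtain rfl : a = c + 1 := by omega
    have d := K3_diff s hs c hqa
    have hq := Qf_succ s c
    rcases lt_trichotomy (Qf s (c + 1)) 1 with h4 | h4 | h4
    · apply hmin c (b + 1) c (by omega)
      refine ⟨hqc, hqc, ?_⟩
      have : 1 < (s + 1) / (Qf s (c + 1) * Qf s c) := by
        rw [one_lt_div (mul_pos hqa hqc), hq]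
        nlinarith
      push_cast
      linarith
    · have e1 : K3 s (c + 1) = (1 + 1 / s) * (1 + 1 / 1) := by rw [K3_eq s hs _ hqa, h4]
      have e2 : K3 s c = (1 + 1 / s) * (1 + 1 / (1 + s)) := by rw [K3_eq s hs _ hqc, hq, h4]
      rw [e1, e2] at heq
      have e3 : s * (s + 1 - b) = 3 * s + 4 := by
        rw [← heq]
        field_simp
        ring
      unfold Qf at h4
      have e4 : s * ((c + 1 : ℕ) - 2 - b : ℝ) = 2 := by linarith
      have e5 : (0 : ℝ) < ((c + 1 : ℕ) - 2 - b : ℝ) := by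
        by_contra hcon
        nlinarith
      have e6 : b + 2 < c + 1 := by
        have : ((b + 2 : ℕ) : ℝ) < ((c + 1 : ℕ) : ℝ) := by push_cast at *; linarith
        exact_mod_cast this
      have e7 : (1 : ℝ) ≤ ((c + 1 : ℕ) - 2 - b : ℝ) := by
        have : ((b + 3 : ℕ) : ℝ) ≤ ((c + 1 : ℕ) : ℝ) := by exact_mod_cast e6
        push_cast at *; linarith
      have e8 : s ≤ 2 := by nlinarith
      have e9 : (3 : ℝ) ≤ ((c + 1 : ℕ) : ℝ) := by
        have : 3 ≤ c + 1 := by omega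
        exact_mod_cast this
      linarith
    · rcases Nat.eq_zero_or_pos b with rfl | hb
      · have e1 : K3 s (c + 1) < (1 + 1 / s) * (1 + 1 / 1) := by
          rw [K3_eq s hs _ hqa]
          have : 1 / Qf s (c + 1) < 1 / 1 := one_div_lt_one_div_of_lt one_pos h4
          have : 0 < 1 + 1 / s := by positivity
          nlinarith
        have e2 : K3 s c < (1 + 1 / s) * (1 + 1 / (1 + s)) := by
          rw [K3_eq s hs _ hqc]
          have : 1 / Qf s c < 1 / (1 + s) :=
            one_div_lt_one_div_of_lt (by linarith) (by linarith)
          have : 0 < 1 + 1 / s := by positivity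
          nlinarith
        have e3 : s * (s + 1) < 3 * s + 4 := by
          have : s + 1 < (1 + 1 / s) * (1 + 1 / 1) + (1 + 1 / s) * (1 + 1 / (1 + s)) := by
            push_cast at heq; linarith
          have h5 : s * (s + 1) < s * ((1 + 1 / s) * (1 + 1 / 1) + (1 + 1 / s) * (1 + 1 / (1 + s))) :=
            mul_lt_mul_of_pos_left this hs
          have h6 : s * ((1 + 1 / s) * (1 + 1 / 1) + (1 + 1 / s) * (1 + 1 / (1 + s))) = 3 * s + 4 := by
            field_simp
            ring
          linarith
        have e9 : (3 : ℝ) ≤ ((c + 1 : ℕ) : ℝ) := by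
          have : 3 ≤ c + 1 := by omega
          exact_mod_cast this
        unfold Qf at h4
        nlinarith
      · obtain ⟨b, rfl⟩ : ∃ b0, b = b0 + 1 := ⟨b - 1, by omega⟩
        apply hmin (c + 1) b (c + 1) (by omega)
        refine ⟨hqa, hqa, ?_⟩
        have : (s + 1) / (Qf s (c + 1) * Qf s c) < 1 := by
          rw [div_lt_one (mul_pos hqa hqc), hq]
          nlinarith
        push_cast at heq
        linarith
  · obtain rfl : a = c := by omega
    refine ⟨rfl, ?_, heq⟩
    by_contra h0
    obtain rfl : a = 0 := by omega
    obtain ⟨b, rfl⟩ : ∃ b0, b = b0 + 1 := ⟨b - 1, by omega⟩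
    have hbig : (5 : ℝ) < s := by
      have e1 : 1 < K3 s 0 := by
        rw [K3_eq s hs _ hqa]
        have : 0 < 1 / s := by positivity
        have : 0 < 1 / Qf s 0 := by positivity
        nlinarith
      have : (3 : ℝ) ≤ b := by
        have : 3 ≤ b := by omega
        exact_mod_cast this
      push_cast at heq
      linarith
    have hq1 : 0 < Qf s (0 + 1) := by unfold Qf; push_cast; nlinarith
    have d := K3_diff s hs 0 hq1
    apply hmin 1 b 0 (by omega)
    refine ⟨hq1, hqc, ?_⟩
    have : (s + 1) / (Qf s (0 + 1) * Qf s 0) < 1 := by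
      rw [div_lt_one (mul_pos hq1 hqa), Qf_succ s 0]
      have : 1 < Qf s (0 + 1) := by unfold Qf; push_cast; nlinarith
      nlinarith
    push_cast at heq
    simp only [zero_add] at *
    linarith

theorem num_main (s : ℝ) (hs : 0 < s) (a b c : ℕ) (hsum : 4 ≤ a + b + c)
    (hqa : 0 < Qf s a) (hqc : 0 < Qf s c) (h : K3 s a + K3 s c ≤ s + 1 - b)
    (hmin : ∀ a' b' c', a' + b' + c' = a + b + c → ¬ UC s a' b' c') :
    a = c ∧ 1 ≤ a ∧ K3 s a + K3 s c = s + 1 - b := by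
  rcases le_total c a with hca | hac
  · exact num_wlog s hs a b c hsum hca hqa h hmin
  · have := num_wlog s hs c b a (by omega) hac hqc (by linarith)
      (fun a' b' c' h => hmin a' b' c' (by omega))
    obtain ⟨h1, h2, h3⟩ := this
    exact ⟨h1.symm, by omega, by linarith⟩

/-- Two bare paths of length two at the centre. -/
theorem num_exc2 (s : ℝ) (hs : 0 < s) (b : ℕ) (hb : 6 ≤ b)
    (h : (1 + 1 / s) + (1 + 1 / s) ≤ s + 1 - b) : UC s 0 (b - 2) 0 := by
  obtain ⟨b, rfl⟩ : ∃ b0, b = b0 + 2 := ⟨b - 2, by omega⟩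
  have hb' : (4 : ℝ) ≤ b := by
    have : 4 ≤ b := by omega
    exact_mod_cast this
  have h1 : 0 < 1 / s := by positivity
  push_cast at h
  have hs5 : 5 < s := by linarith
  have hq : 1 < Qf s 0 := by unfold Qf; push_cast; nlinarith
  refine ⟨by linarith, by linarith, ?_⟩
  rw [K3_eq s hs 0 (by linarith)]
  have h2 : 1 / Qf s 0 < 1 / 2 := one_div_lt_one_div_of_lt (by norm_num)
    (by unfold Qf; push_cast; nlinarith)
  have h3 : 1 / s < 1 := by rw [div_lt_one hs]; linarith
  have h4 : (0 : ℝ) < 1 + 1 / s := by linarith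
  simp only [Nat.add_sub_cancel]
  nlinarith

/-- One bare path of length two at the centre. -/
theorem num_exc1 (s : ℝ) (hs : 0 < s) (b c : ℕ) (hbc : 5 ≤ b + c) (hqc : 0 < Qf s c)
    (h : (1 + 1 / s) + K3 s c ≤ s + 1 - b) :
    ∃ a' b' c', a' + b' + c' + 1 = b + c ∧ UC s a' b' c' := by
  have h1 : 0 < 1 / s := by positivity
  have h0 : 0 < 1 / Qf s c := by positivity
  have hk : 1 < K3 s c := by
    rw [K3_eq s hs _ hqc]
    nlinarith
  have hcs := lt_of_Qf s hs c hqc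
  rcases Nat.eq_zero_or_pos b with rfl | hb
  · obtain ⟨c, rfl⟩ : ∃ c0, c = c0 + 2 := ⟨c - 2, by omega⟩
    have hc5 : (5 : ℝ) ≤ ((c + 2 : ℕ) : ℝ) := by
      have : 5 ≤ c + 2 := by omega
      exact_mod_cast this
    have hs5 : 5 < s := by linarith
    have hq0 : 5 < Qf s 0 := by unfold Qf; push_cast; nlinarith
    have hqc2 : 5 < Qf s c := by
      rw [Qf_succ s c, Qf_succ s (c + 1)]; linarith
    have i0 : 1 / Qf s 0 < 1 / 5 := one_div_lt_one_div_of_lt (by norm_num) hq0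
    have i1 : 1 / Qf s c < 1 / 5 := one_div_lt_one_div_of_lt (by norm_num) hqc2
    have i2 : 1 / s < 1 / 5 := one_div_lt_one_div_of_lt (by norm_num) hs5
    refine ⟨0, 1, c, by omega, by linarith, by linarith, ?_⟩
    rw [K3_eq s hs 0 (by linarith), K3_eq s hs c (by linarith)]
    push_cast
    have : 0 < 1 / Qf s 0 := by positivity
    have : 0 < 1 / Qf s c := by
      have : 0 < Qf s c := by linarith
      positivity
    nlinarith
  · obtain ⟨b, rfl⟩ : ∃ b0, b = b0 + 1 := ⟨b - 1, by omega⟩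
    push_cast at h
    have hb0 : (0 : ℝ) ≤ b := Nat.cast_nonneg b
    have hs2 : 2 < s := by linarith
    have hq0 : 1 + s ≤ Qf s 0 := by unfold Qf; push_cast; nlinarith
    refine ⟨0, b, c, by omega, by linarith, hqc, ?_⟩
    rw [K3_eq s hs 0 (by linarith)]
    have i0 : 1 / Qf s 0 ≤ 1 / (1 + s) := one_div_le_one_div_of_le (by linarith) hq0
    have i1 : (1 + 1 / s) * (1 / (1 + s)) = 1 / s := by
      field_simp
      ring
    have i2 : 1 / s < 1 / 2 := one_div_lt_one_div_of_lt (by norm_num) hs2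
    have i3 : 0 < 1 + 1 / s := by linarith
    have i4 : (1 + 1 / s) * (1 / Qf s 0) ≤ (1 + 1 / s) * (1 / (1 + s)) :=
      mul_le_mul_of_nonneg_left i0 i3.le
    have : (1 + 1 / s) * (1 + 1 / Qf s 0) = (1 + 1 / s) + (1 + 1 / s) * (1 / Qf s 0) := by ring
    linarith

/-- The spider case. -/
theorem num_tripod (s : ℝ) (hs : 0 < s) (a b c : ℕ) (hb : 0 < s + 1 - (b + 1 : ℕ))
    (ha : 0 < s - a) (hc : 0 < s - c)
    (h : (s + 1) / (s + 1 - (b + 1 : ℕ)) + (1 + 1 / (s - a)) + (1 + 1 / (s - c)) ≤ s + 1) :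
    UC s a b c := by
  set X := 1 + 1 / (s - a) with hX
  set Y := 1 + 1 / (s - c) with hY
  have hX0 : 0 < X := by positivity
  have hY0 : 0 < Y := by positivity
  set t := s + 1 with ht
  have ht0 : 0 < t := by linarith
  have h1 : 0 < t / (t - (b + 1 : ℕ)) := by positivity
  have hZ : 0 < t - X - Y := by linarith
  have h2 : t / (t - X - Y) ≤ t - (b + 1 : ℕ) := by
    rw [div_le_iff₀ hZ]
    have : t / (t - (b + 1 : ℕ)) ≤ t - X - Y := by linarith
    rw [div_le_iff₀ hb] at this
    linarith
  have hXq : Qf s a = (t - X) * (s - a) := by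
    rw [hX, ht]; unfold Qf; field_simp; ring
  have hYq : Qf s c = (t - Y) * (s - c) := by
    rw [hY, ht]; unfold Qf; field_simp; ring
  have hX1 : 0 < t - X := by linarith
  have hY1 : 0 < t - Y := by linarith
  have hqa : 0 < Qf s a := by rw [hXq]; positivity
  have hqc : 0 < Qf s c := by rw [hYq]; positivity
  have kX : K3 s a = t / (t - X) := by
    have : K3 s a = t * (s - a) / Qf s a := rfl
    rw [this, hXq, mul_div_mul_right _ _ ha.ne']
  have kY : K3 s c = t / (t - Y) := by
    have : K3 s c = t * (s - c) / Qf s c := rfl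
    rw [this, hYq, mul_div_mul_right _ _ hc.ne']
  refine ⟨hqa, hqc, ?_⟩
  rw [kX, kY]
  push_cast at h2
  have h3 : t / (t - X) + t / (t - Y) < 1 + t / (t - X - Y) := by
    rw [div_add_div _ _ hX1.ne' hY1.ne', one_add_div hZ.ne', div_lt_div_iff₀ (mul_pos hX1 hY1) hZ]
    nlinarith [mul_pos hX0 hY0, mul_pos (mul_pos hX0 hY0) hZ, mul_pos (mul_pos hX0 hY0) ht0]
  linarith

/-- A branch at the centre with `N` vertices and contribution `κ`. -/
def Br (s κ : ℝ) (N : ℕ) (tight : Prop) : Prop :=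
  (N = 2 ∧ κ = 1 + 1 / s) ∨
    ∃ a : ℕ, N = a + 3 ∧ 0 < Qf s a ∧ K3 s a ≤ κ ∧ (κ = K3 s a → 1 ≤ a → tight)

theorem br_one (s lam xu xm : ℝ) (hs : 0 < s) (hl : 0 < lam) (hls : lam ^ 2 = s + 1)
    (hu : 0 < xu) (hm : 0 < xm) (a : ℕ) (ha : 1 ≤ a) (h : (lam ^ 2 - a) * xu = lam * xm) :
    Br s (lam * xu / xm) (a + 1) False := by
  have hy : 0 < lam ^ 2 - a := by
    by_contra hc
    nlinarith [mul_pos hl hm]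
  rw [hls] at h hy
  have hk : lam * xu / xm = (s + 1) / (s + 1 - a) := by
    rw [div_eq_div_iff hm.ne' hy.ne']
    have : lam ^ 2 * xm = lam * (lam * xm) := by ring
    rw [← hls, this, ← h, hls]
    ring
  rw [hk]
  obtain ⟨a, rfl⟩ : ∃ a0, a = a0 + 1 := ⟨a - 1, by omega⟩
  rcases Nat.eq_zero_or_pos a with rfl | ha
  · left
    refine ⟨rfl, ?_⟩
    push_cast
    have : s + 1 - 1 = s := by ring
    rw [this]
    field_simp
  · right
    obtain ⟨a, rfl⟩ : ∃ a0, a = a0 + 1 := ⟨a - 1, by omega⟩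
    have hcast : ((a + 1 + 1 : ℕ) : ℝ) = a + 1 + 1 := by push_cast; ring
    rw [hcast] at hy ⊢
    have ha0 : (0 : ℝ) ≤ a := Nat.cast_nonneg a
    have hq : 0 < Qf s a := by unfold Qf; nlinarith
    have hlt : K3 s a < (s + 1) / (s + 1 - (a + 1 + 1)) := by
      have h0 : K3 s a = (s + 1) * (s - a) / Qf s a := rfl
      rw [h0, div_lt_div_iff₀ hq hy]
      have : (s - a) * (s + 1 - (a + 1 + 1)) < Qf s a := by unfold Qf; nlinarith
      nlinarith
    exact ⟨a, rfl, hq, hlt.le, fun h => absurd h hlt.ne'⟩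

theorem two_ratio (s lam xu xp xm : ℝ) (hl : 0 < lam) (hls : lam ^ 2 = s + 1)
    (hu : 0 < xu) (hp : 0 < xp) (hm : 0 < xm) (a : ℝ)
    (h : (lam ^ 2 - a) * xu = lam * xp) (h2 : lam * xp = xu + xm) :
    0 < s - a ∧ (s - a) * (lam * xp) = (s + 1 - a) * xm := by
  have hy : 0 < lam ^ 2 - a := by
    by_contra hc
    nlinarith [mul_pos hl hp]
  rw [hls] at h hy
  have e : (s - a) * (lam * xp) = (s + 1 - a) * xm := by
    have : (s + 1 - a) * (lam * xp) = (s + 1 - a) * (xu + xm) := by rw [h2]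
    nlinarith
  refine ⟨?_, e⟩
  by_contra hc
  nlinarith [mul_pos hy hm, mul_pos hl hp]

theorem br_two (s lam xu xp xm : ℝ) (hl : 0 < lam) (hls : lam ^ 2 = s + 1)
    (hu : 0 < xu) (hp : 0 < xp) (hm : 0 < xm) (a : ℕ) (ha : 1 ≤ a)
    (h : (lam ^ 2 - a) * xu = lam * xp) (h2 : lam * xp = xu + xm) :
    Br s (lam * xp / xm) (a + 2) False := by
  obtain ⟨hy, e⟩ := two_ratio s lam xu xp xm hl hls hu hp hm a h h2
  have hk : lam * xp / xm = (s + 1 - a) / (s - a) := by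
    rw [div_eq_div_iff hm.ne' hy.ne']
    linarith
  rw [hk]
  right
  obtain ⟨a, rfl⟩ : ∃ a0, a = a0 + 1 := ⟨a - 1, by omega⟩
  have hcast : ((a + 1 : ℕ) : ℝ) = a + 1 := by push_cast; ring
  rw [hcast] at hy ⊢
  have ha0 : (0 : ℝ) ≤ a := Nat.cast_nonneg a
  have hq : 0 < Qf s a := by unfold Qf; nlinarith
  have hid : (s + 1 - (a + 1)) / (s - (a + 1)) - K3 s a
      = a * (s - a) / ((s - (a + 1)) * Qf s a) := by
    have hq' := hq.ne'
    have hy' := hy.ne'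
    unfold K3
    unfold Qf at *
    field_simp
    ring
  have hsa : 0 < s - a := by linarith
  refine ⟨a, rfl, hq, ?_, ?_⟩
  · have : 0 ≤ a * (s - a) / ((s - (a + 1)) * Qf s a) := by positivity
    linarith
  · intro h3 h4
    have h5 : (0 : ℝ) < a := by exact_mod_cast h4
    have : 0 < a * (s - a) / ((s - (a + 1)) * Qf s a) := by positivity
    linarith

theorem br_three (s lam xu xp xq xm : ℝ) (hl : 0 < lam) (hls : lam ^ 2 = s + 1)
    (hu : 0 < xu) (hp : 0 < xp) (hq : 0 < xq) (hm : 0 < xm) (a : ℕ)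
    (h : (lam ^ 2 - a) * xu = lam * xp) (h2 : lam * xp = xu + xq) (h3 : lam * xq = xm + xp) :
    Br s (lam * xq / xm) (a + 3) True := by
  obtain ⟨hy, e⟩ := two_ratio s lam xu xp xq hl hls hu hp hq a h h2
  have e2 : Qf s a * xq = (s - a) * (lam * xm) := by
    have : (s - a) * (lam ^ 2 * xq) = (s - a) * (lam * xm) + (s - a) * (lam * xp) := by
      rw [sq, mul_assoc, h3]; ring
    rw [e, hls] at this
    unfold Qf
    linarith
  have hQ : 0 < Qf s a := by
    by_contra hc
    nlinarith [mul_pos hy (mul_pos hl hm)]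
  right
  refine ⟨a, rfl, hQ, ?_, fun _ _ => trivial⟩
  have : lam * xq / xm = K3 s a := by
    have h0 : K3 s a = (s + 1) * (s - a) / Qf s a := rfl
    rw [h0, div_eq_div_iff hm.ne' hQ.ne', ← hls]
    have : lam * (Qf s a * xq) = lam * ((s - a) * (lam * xm)) := by rw [e2]
    linarith
  exact this.ge

theorem Br.mono_tight {s κ : ℝ} {N : ℕ} {P Q : Prop} (h : Br s κ N P) (hPQ : P → Q) :
    Br s κ N Q := by
  rcases h with h | ⟨a, h1, h2, h3, h4⟩
  · exact Or.inl h
  · exact Or.inr ⟨a, h1, h2, h3, fun i j => hPQ (h4 i j)⟩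

/-- Conclusion from the two branches at the centre. -/
theorem br_combine (s κ₁ κ₃ : ℝ) (hs : 0 < s) (N₁ N₃ b n : ℕ) (P₁ P₃ : Prop) (hn : 11 ≤ n)
    (hN : n = 1 + N₁ + N₃ + b) (h1 : Br s κ₁ N₁ P₁) (h3 : Br s κ₃ N₃ P₃)
    (h : s + 1 - b = κ₁ + κ₃)
    (hmin : ∀ a' b' c', a' + b' + c' + 7 = n → ¬ UC s a' b' c') :
    P₁ ∧ P₃ ∧ N₁ = N₃ ∧ 4 ≤ N₁ := by
  rcases h1 with ⟨e1, k1⟩ | ⟨a, e1, q1, l1, t1⟩ <;> rcases h3 with ⟨e3, k3⟩ | ⟨c, e3, q3, l3, t3⟩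
  · exfalso
    exact hmin 0 (b - 2) 0 (by omega) (num_exc2 s hs b (by omega) (by rw [h, k1, k3]))
  · exfalso
    obtain ⟨a', b', c', h4, h5⟩ := num_exc1 s hs b c (by omega) q3 (by rw [h, k1]; linarith)
    exact hmin a' b' c' (by omega) h5
  · exfalso
    obtain ⟨a', b', c', h4, h5⟩ := num_exc1 s hs b a (by omega) q1 (by rw [h, k3]; linarith)
    exact hmin a' b' c' (by omega) h5
  · obtain ⟨h4, h5, h6⟩ := num_main s hs a b c (by omega) q1 q3 (by linarith)
      (fun a' b' c' h' => hmin a' b' c' (by omega))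
    exact ⟨t1 (by linarith) h5, t3 (by linarith) (by omega), by omega, by omega⟩

/-- A leg of the spider. -/
theorem leg_one (s lam xu xm : ℝ) (hl : 0 < lam) (hls : lam ^ 2 = s + 1)
    (hu : 0 < xu) (hm : 0 < xm) (a : ℕ) (h : (lam ^ 2 - (a + 1 : ℕ)) * xu = lam * xm) :
    0 < s - a ∧ 1 + 1 / (s - a) ≤ lam * xu / xm := by
  have hy : 0 < lam ^ 2 - (a + 1 : ℕ) := by
    by_contra hc
    nlinarith [mul_pos hl hm]
  rw [hls] at h hy
  have hk : lam * xu / xm = (s + 1) / (s + 1 - (a + 1 : ℕ)) := by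
    rw [div_eq_div_iff hm.ne' hy.ne']
    have : lam ^ 2 * xm = lam * (lam * xm) := by ring
    rw [← hls, this, ← h, hls]
    ring
  rw [hk]
  push_cast at hy ⊢
  have hy2 : 0 < s - a := by linarith
  have ha0 : (0 : ℝ) ≤ a := Nat.cast_nonneg a
  refine ⟨hy2, ?_⟩
  have : s + 1 - (a + 1) = s - a := by ring
  rw [this, one_add_div hy2.ne', div_le_div_iff_of_pos_right hy2]
  linarith

theorem leg_two (s lam xu xp xm : ℝ) (hl : 0 < lam) (hls : lam ^ 2 = s + 1)
    (hu : 0 < xu) (hp : 0 < xp) (hm : 0 < xm) (a : ℕ)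
    (h : (lam ^ 2 - a) * xu = lam * xp) (h2 : lam * xp = xu + xm) :
    0 < s - a ∧ 1 + 1 / (s - a) ≤ lam * xp / xm := by
  obtain ⟨hy, e⟩ := two_ratio s lam xu xp xm hl hls hu hp hm a h h2
  refine ⟨hy, ?_⟩
  rw [one_add_div hy.ne', div_le_div_iff₀ hy hm]
  linarith

/-- `G` consists of three stars (given by the centre map `c`) and the two joining edges
`pq` and `rs`. -/
structure IsTri {V : Type*} (G : SimpleGraph V) (c : V → V) (u1 u2 u3 p q r s : V) : Prop where
  h12 : u1 ≠ u2
  h13 : u1 ≠ u3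
  h23 : u2 ≠ u3
  cov : ∀ v, c v = u1 ∨ c v = u2 ∨ c v = u3
  c1 : c u1 = u1
  c2 : c u2 = u2
  c3 : c u3 = u3
  cp : c p = u1
  cq : c q = u2
  cr : c r = u2
  cs : c s = u3
  adj : ∀ x y, G.Adj x y ↔ (x ≠ y ∧ (c x = y ∨ c y = x)) ∨ (x = p ∧ y = q) ∨ (x = q ∧ y = p) ∨
    (x = r ∧ y = s) ∨ (x = s ∧ y = r)

namespace IsTri

variable {V : Type*} {G : SimpleGraph V} {c : V → V} {u1 u2 u3 p q r s : V}

theorem swap (h : IsTri G c u1 u2 u3 p q r s) : IsTri G c u3 u2 u1 s r q p where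
  h12 := h.h23.symm
  h13 := h.h13.symm
  h23 := h.h12.symm
  cov v := by have := h.cov v; tauto
  c1 := h.c3
  c2 := h.c2
  c3 := h.c1
  cp := h.cs
  cq := h.cr
  cr := h.cq
  cs := h.cp
  adj x y := by rw [h.adj]; tauto

theorem idem (h : IsTri G c u1 u2 u3 p q r s) (v : V) : c (c v) = c v := by
  rcases h.cov v with e | e | e <;> rw [e]
  · exact h.c1
  · exact h.c2
  · exact h.c3

/-- Leaves of the star with centre `u`. -/
def F [Fintype V] [DecidableEq V] (c : V → V) (u : V) : Finset V :=
  Finset.univ.filter (fun w => w ≠ u ∧ c w = u)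

variable [Fintype V] [DecidableEq V]

theorem mem_F (u w : V) : w ∈ F c u ↔ w ≠ u ∧ c w = u := by simp [F]

theorem entry (h : IsTri G c u1 u2 u3 p q r s) (v w : V) :
    adjMat G v w = (if w ≠ v ∧ c w = v then 1 else 0) + (if v ≠ c v ∧ w = c v then 1 else 0)
      + (if v = p ∧ w = q then 1 else 0) + (if v = q ∧ w = p then 1 else 0)
      + (if v = r ∧ w = s then 1 else 0) + (if v = s ∧ w = r then 1 else 0) := by
  classical
  have hi := h.idem v
  have hi2 := h.idem w
  obtain ⟨h12, h13, h23, cov, c1, c2, c3, cp, cq, cr, cs, adj⟩ := h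
  rw [adjMat_apply']
  have hadj := adj v w
  by_cases hA : G.Adj v w
  · rw [if_pos hA]
    rw [hadj] at hA
    rcases hA with ⟨hne, e | e⟩ | ⟨rfl, rfl⟩ | ⟨rfl, rfl⟩ | ⟨rfl, rfl⟩ | ⟨rfl, rfl⟩
    · subst e
      have a1 : ¬ (c v ≠ v ∧ c (c v) = v) := by grind
      have a2 : ¬ (v = p ∧ c v = q) := by grind
      have a3 : ¬ (v = q ∧ c v = p) := by grind
      have a4 : ¬ (v = r ∧ c v = s) := by grind
      have a5 : ¬ (v = s ∧ c v = r) := by grind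
      simp [a1, a2, a3, a4, a5, hne]
    · subst e
      have a1 : ¬ (c w ≠ c (c w) ∧ w = c (c w)) := by grind
      have a2 : ¬ (c w = p ∧ w = q) := by grind
      have a3 : ¬ (c w = q ∧ w = p) := by grind
      have a4 : ¬ (c w = r ∧ w = s) := by grind
      have a5 : ¬ (c w = s ∧ w = r) := by grind
      simp [a1, a2, a3, a4, a5, hne.symm]
    · grind
    · grind
    · grind
    · grind
  · rw [if_neg hA]
    rw [hadj] at hA
    grind

theorem rowsum (h : IsTri G c u1 u2 u3 p q r s) (x : V → ℝ) (v : V) :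
    ∑ w, adjMat G v w * x w = ∑ w ∈ F c v, x w + (if v ≠ c v then x (c v) else 0)
      + (if v = p then x q else 0) + (if v = q then x p else 0)
      + (if v = r then x s else 0) + (if v = s then x r else 0) := by
  simp only [h.entry, add_mul, Finset.sum_add_distrib, ite_mul, one_mul, zero_mul]
  have e1 : ∀ (P : Prop) [Decidable P] (y : V),
      ∑ w, (if P ∧ w = y then x w else 0) = if P then x y else 0 := by
    intro P _ y
    by_cases hP : P <;> simp [hP]
  rw [e1, e1, e1, e1, e1, F, Finset.sum_filter]

theorem F_leaf (h : IsTri G c u1 u2 u3 p q r s) (v : V) (hv : v ≠ c v) : F c v = ∅ := by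
  ext w
  rw [mem_F]
  have := h.idem w
  constructor
  · rintro ⟨_, rfl⟩
    exact absurd this.symm hv
  · simp

variable {lam : ℝ} {x : V → ℝ}

theorem leaf_eq (h : IsTri G c u1 u2 u3 p q r s)
    (he : ∀ v, ∑ w, adjMat G v w * x w = lam * x v) (v : V) (hv : v ≠ c v) :
    lam * x v = x (c v) + (if v = p then x q else 0) + (if v = q then x p else 0)
      + (if v = r then x s else 0) + (if v = s then x r else 0) := by
  rw [← he, h.rowsum, h.F_leaf v hv, if_pos hv]
  simp

theorem centre_eq (h : IsTri G c u1 u2 u3 p q r s)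
    (he : ∀ v, ∑ w, adjMat G v w * x w = lam * x v) (v : V) (hv : c v = v) :
    lam * x v = ∑ w ∈ F c v, x w + (if v = p then x q else 0) + (if v = q then x p else 0)
      + (if v = r then x s else 0) + (if v = s then x r else 0) := by
  rw [← he, h.rowsum, if_neg (by simp [hv])]
  simp

theorem fiber_sum (h : IsTri G c u1 u2 u3 p q r s)
    (he : ∀ v, ∑ w, adjMat G v w * x w = lam * x v) (u : V) :
    lam * ∑ w ∈ F c u, x w = (F c u).card * x u + (if p ∈ F c u then x q else 0)
      + (if q ∈ F c u then x p else 0) + (if r ∈ F c u then x s else 0)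
      + (if s ∈ F c u then x r else 0) := by
  have : ∀ w ∈ F c u, lam * x w = x u + (if w = p then x q else 0) + (if w = q then x p else 0)
      + (if w = r then x s else 0) + (if w = s then x r else 0) := by
    intro w hw
    rw [mem_F] at hw
    rw [h.leaf_eq he w (by rw [hw.2]; exact hw.1), hw.2]
  rw [Finset.mul_sum, Finset.sum_congr rfl this]
  simp only [Finset.sum_add_distrib, Finset.sum_const, nsmul_eq_mul, Finset.sum_ite_eq']

theorem card_eq (h : IsTri G c u1 u2 u3 p q r s) :
    Fintype.card V = (F c u1).card + 1 + ((F c u2).card + 1) + ((F c u3).card + 1) := by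
  have key : ∀ u, c u = u → (Finset.univ.filter (fun w => c w = u)).card = (F c u).card + 1 := by
    intro u hu
    have : Finset.univ.filter (fun w => c w = u) = insert u (F c u) := by
      ext w
      simp only [Finset.mem_filter, Finset.mem_univ, true_and, Finset.mem_insert, mem_F]
      constructor
      · intro e
        by_cases hw : w = u
        · exact Or.inl hw
        · exact Or.inr ⟨hw, e⟩
      · rintro (rfl | e)
        · exact hu
        · exact e.2
    rw [this, Finset.card_insert_of_notMem (by simp [mem_F])]
  rw [← key u1 h.c1, ← key u2 h.c2, ← key u3 h.c3, ← Finset.card_union_of_disjoint,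
    ← Finset.card_union_of_disjoint, ← Finset.card_univ]
  · congr 1
    ext w
    have := h.cov w
    simp only [Finset.mem_univ, Finset.mem_union, Finset.mem_filter, true_and, true_iff]
    tauto
  · rw [Finset.disjoint_left]
    intro w
    have := h.h13
    have := h.h23
    simp only [Finset.mem_union, Finset.mem_filter, Finset.mem_univ, true_and]
    grind
  · rw [Finset.disjoint_left]
    intro w
    have := h.h12
    simp only [Finset.mem_filter, Finset.mem_univ, true_and]
    grind

/-- Equations at the end star. -/
theorem end_eq (h : IsTri G c u1 u2 u3 p q r s)
    (he : ∀ v, ∑ w, adjMat G v w * x w = lam * x v) :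
    (p = u1 ∧ (lam ^ 2 - (F c u1).card) * x u1 = lam * x q) ∨
    (p ≠ u1 ∧ (lam ^ 2 - ((F c u1).card - 1 : ℝ)) * x u1 = lam * x p ∧
      lam * x p = x u1 + x q) := by
  have hc := h.centre_eq he u1 h.c1
  have hf := h.fiber_sum he u1
  have hl := h.leaf_eq he p
  have hq : u1 ≠ q := by have := h.cq; have := h.c1; have := h.h12; grind
  have hr : u1 ≠ r := by have := h.cr; have := h.c1; have := h.h12; grind
  have hs : u1 ≠ s := by have := h.cs; have := h.c1; have := h.h13; grind
  have hpq : p ≠ q := by have := h.cq; have := h.cp; have := h.h12; grind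
  have hpr : p ≠ r := by have := h.cr; have := h.cp; have := h.h12; grind
  have hps : p ≠ s := by have := h.cs; have := h.cp; have := h.h13; grind
  have hq' : q ∉ F c u1 := by rw [mem_F, h.cq]; have := h.h12; grind
  have hr' : r ∉ F c u1 := by rw [mem_F, h.cr]; have := h.h12; grind
  have hs' : s ∉ F c u1 := by rw [mem_F, h.cs]; have := h.h13; grind
  simp only [hq, hr, hs, hq', hr', hs', if_false, add_zero] at hc hf
  by_cases hp : p = u1
  · left
    have hp' : p ∉ F c u1 := by rw [mem_F]; tauto
    simp only [hp.symm, if_true, hp', if_false] at hc hf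
    subst hp
    simp only [if_true, hp', if_false] at hc hf
    refine ⟨rfl, ?_⟩
    have : lam ^ 2 * x p = lam * (lam * x p) := by ring
    rw [sub_mul, this, hc]
    linarith
  · right
    have hp' : p ∈ F c u1 := by rw [mem_F]; exact ⟨hp, h.cp⟩
    rw [h.cp] at hl
    have hl := hl hp
    simp only [if_true, hpq, hpr, hps, if_false, add_zero] at hl
    simp only [Ne.symm hp, if_false, hp', if_true, add_zero] at hc hf
    refine ⟨hp, ?_, hl⟩
    have : lam ^ 2 * x u1 = lam * (lam * x u1) := by ring
    rw [sub_mul, this, hc]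
    linarith

/-- Equations at the middle star. -/
theorem mid_eq (h : IsTri G c u1 u2 u3 p q r s)
    (he : ∀ v, ∑ w, adjMat G v w * x w = lam * x v) :
    (q = r ∧ q ≠ u2 ∧ (lam ^ 2 - ((F c u2).card - 1 : ℝ)) * x u2 = lam * x q ∧
      lam * x q = x u2 + x p + x s) ∨
    (q = u2 ∧ r = u2 ∧ (lam ^ 2 - (F c u2).card) * x u2 = lam * x p + lam * x s) ∨
    (q ≠ u2 ∧ r = u2 ∧ (lam ^ 2 - ((F c u2).card - 1 : ℝ)) * x u2 = lam * x q + lam * x s ∧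
      lam * x q = x u2 + x p) ∨
    (q = u2 ∧ r ≠ u2 ∧ (lam ^ 2 - ((F c u2).card - 1 : ℝ)) * x u2 = lam * x p + lam * x r ∧
      lam * x r = x u2 + x s) ∨
    (q ≠ r ∧ q ≠ u2 ∧ r ≠ u2 ∧ 
      (lam ^ 2 - ((F c u2).card - 2 : ℝ)) * x u2 = lam * x q + lam * x r ∧
      lam * x q = x u2 + x p ∧ lam * x r = x u2 + x s) := by
  have hc := h.centre_eq he u2 h.c2
  have hf := h.fiber_sum he u2
  have hlq := h.leaf_eq he q
  have hlr := h.leaf_eq he r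
  have hp : u2 ≠ p := by have := h.cp; have := h.c2; have := h.h12; grind
  have hs : u2 ≠ s := by have := h.cs; have := h.c2; have := h.h23; grind
  have hqp : q ≠ p := by have := h.cq; have := h.cp; have := h.h12; grind
  have hqs : q ≠ s := by have := h.cq; have := h.cs; have := h.h23; grind
  have hrp : r ≠ p := by have := h.cr; have := h.cp; have := h.h12; grind
  have hrs : r ≠ s := by have := h.cr; have := h.cs; have := h.h23; grind
  have hp' : p ∉ F c u2 := by rw [mem_F, h.cp]; have := h.h12; grind
  have hs' : s ∉ F c u2 := by rw [mem_F, h.cs]; have := h.h23; grind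
  have hq' : q ∈ F c u2 ↔ q ≠ u2 := by rw [mem_F, h.cq]; tauto
  have hr' : r ∈ F c u2 ↔ r ≠ u2 := by rw [mem_F, h.cr]; tauto
  rw [h.cq] at hlq
  rw [h.cr] at hlr
  have e2 : lam ^ 2 * x u2 = lam * (lam * x u2) := by ring
  simp only [hp, hs, hp', hs', hqp, hqs, hrp, hrs, hq', hr', if_false, add_zero, if_true] at hc hf hlq hlr
  by_cases h1 : q = u2 <;> by_cases h2 : r = u2
  · right; left
    simp only [h1, h2, ne_eq, not_true_eq_false, if_false, if_true, add_zero] at hc hf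
    refine ⟨h1, h2, ?_⟩
    rw [sub_mul, e2, hc]; linarith
  · right; right; right; left
    have hlr := hlr h2
    have hrq : r ≠ q := by rw [h1]; exact h2
    simp only [h1, h2, Ne.symm h2, ne_eq, not_true_eq_false, not_false_eq_true, if_false, if_true, add_zero] at hc hf hlr
    refine ⟨h1, h2, ?_, hlr⟩
    rw [sub_mul, e2, hc]; linarith
  · right; right; left
    have hlq := hlq h1
    simp only [h1, h2, Ne.symm h1, ne_eq, not_true_eq_false, not_false_eq_true, if_false, if_true, add_zero] at hc hf hlq
    refine ⟨h1, h2, ?_, hlq⟩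
    rw [sub_mul, e2, hc]; linarith
  · have hlq := hlq h1
    have hlr := hlr h2
    by_cases h3 : q = r
    · left
      subst h3
      simp only [h1, Ne.symm h1, ne_eq, not_false_eq_true, if_false, if_true, add_zero] at hc hf hlq
      refine ⟨rfl, h1, ?_, hlq⟩
      rw [sub_mul, e2, hc]; linarith
    · right; right; right; right
      simp only [h1, h2, h3, Ne.symm h3, Ne.symm h1, Ne.symm h2, ne_eq, not_false_eq_true, if_false, if_true, add_zero] at hc hf hlq hlr
      refine ⟨h3, h1, h2, ?_, hlq, hlr⟩
      rw [sub_mul, e2, hc]; linarith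

end IsTri

namespace IsTri

variable {V : Type*} {G : SimpleGraph V} {c : V → V} {u1 u2 u3 p q r s : V}
variable [Fintype V] [DecidableEq V] {lam : ℝ} {x : V → ℝ}

/-- The branch containing the end star `u1`. -/
theorem branch (h : IsTri G c u1 u2 u3 p q r s)
    (he : ∀ v, ∑ w, adjMat G v w * x w = lam * x v) (hx : ∀ v, 0 < x v) (t : ℝ) (ht : 0 < t)
    (hl : 0 < lam) (hlt : lam ^ 2 = t + 1) (hF : 1 ≤ (F c u1).card)
    (hF' : p ≠ u1 → 2 ≤ (F c u1).card) (hq : q ≠ u2 → lam * x q = x u2 + x p) :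
    Br t (lam * x (if q = u2 then p else q) / x u2) ((F c u1).card + if q = u2 then 1 else 2)
      (p ≠ u1 ∧ q ≠ u2) := by
  rcases h.end_eq he with ⟨hp, e1⟩ | ⟨hp, e1, e2⟩
  · subst hp
    by_cases hq2 : q = u2
    · simp only [hq2, if_true]
      rw [hq2] at e1
      exact (br_one t lam _ _ ht hl hlt (hx _) (hx _) _ hF e1).mono_tight False.elim
    · simp only [hq2, if_false]
      exact (br_two t lam _ _ _ hl hlt (hx _) (hx _) (hx _) _ hF e1
        (by rw [hq hq2]; ring)).mono_tight False.elim
  · have h2 := hF' hp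
    obtain ⟨f, hf⟩ : ∃ f, (F c u1).card = f + 1 := ⟨(F c u1).card - 1, by omega⟩
    rw [hf] at e1 h2 ⊢
    have ec : (((f + 1 : ℕ) : ℝ) - 1) = f := by push_cast; ring
    rw [ec] at e1
    by_cases hq2 : q = u2
    · simp only [hq2, if_true]
      rw [hq2] at e2
      exact (br_two t lam _ _ _ hl hlt (hx _) (hx _) (hx _) f (by omega) e1 e2).mono_tight False.elim
    · simp only [hq2, if_false]
      exact (br_three t lam _ _ _ _ hl hlt (hx _) (hx _) (hx _) (hx _) f e1 e2
        (hq hq2)).mono_tight (fun _ => ⟨hp, hq2⟩)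

/-- The leg containing the end star `u1` when the middle edge endpoint is shared. -/
theorem leg (h : IsTri G c u1 u2 u3 p q r s)
    (he : ∀ v, ∑ w, adjMat G v w * x w = lam * x v) (hx : ∀ v, 0 < x v) (t : ℝ)
    (hl : 0 < lam) (hlt : lam ^ 2 = t + 1) (a : ℕ) (hF : (F c u1).card = a + 1) :
    0 < t - a ∧ 1 + 1 / (t - a) ≤ lam * x p / x q := by
  rcases h.end_eq he with ⟨hp, e1⟩ | ⟨hp, e1, e2⟩
  · subst hp
    rw [hF] at e1
    exact leg_one t lam _ _ hl hlt (hx _) (hx _) a e1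
  · rw [hF] at e1
    have ec : (((a + 1 : ℕ) : ℝ) - 1) = a := by push_cast; ring
    rw [ec] at e1
    exact leg_two t lam _ _ _ hl hlt (hx _) (hx _) (hx _) a e1 e2

theorem analysis (h : IsTri G c u1 u2 u3 p q r s)
    (he : ∀ v, ∑ w, adjMat G v w * x w = lam * x v) (hx : ∀ v, 0 < x v)
    (hl : 0 < lam) (hn : 11 ≤ Fintype.card V) (hF1 : 1 ≤ (F c u1).card)
    (hF1' : p ≠ u1 → 2 ≤ (F c u1).card) (hF3 : 1 ≤ (F c u3).card)
    (hF3' : s ≠ u3 → 2 ≤ (F c u3).card) (hF2 : q = r → q ≠ u2 → 2 ≤ (F c u2).card)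
    (hmin : 0 < lam ^ 2 - 1 → ∀ a b d, a + b + d + 7 = Fintype.card V → ¬ UC (lam ^ 2 - 1) a b d) :
    p ≠ u1 ∧ q ≠ u2 ∧ r ≠ u2 ∧ s ≠ u3 ∧ q ≠ r ∧ (F c u1).card = (F c u3).card ∧
      2 ≤ (F c u1).card := by
  have hlt : lam ^ 2 = (lam ^ 2 - 1) + 1 := by ring
  have ht : 0 < lam ^ 2 - 1 := by
    rcases h.end_eq he with ⟨hp, e1⟩ | ⟨hp, e1, e2⟩
    · have h1 : (1 : ℝ) ≤ (F c u1).card := by exact_mod_cast hF1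
      have := mul_pos hl (hx q)
      rw [← e1] at this
      have := pos_of_mul_pos_left this (hx u1).le
      linarith
    · have h1 : (2 : ℝ) ≤ (F c u1).card := by exact_mod_cast hF1' hp
      have := mul_pos hl (hx p)
      rw [← e1] at this
      have := pos_of_mul_pos_left this (hx u1).le
      linarith
  replace hmin := hmin ht
  generalize lam ^ 2 - 1 = t at *
  have hcard := h.card_eq
  have B1 := h.branch he hx t ht hl hlt hF1 hF1'
  have B3 := h.swap.branch he hx t ht hl hlt hF3 hF3'
  have h2 := hx u2
  rcases h.mid_eq he with ⟨m1, m2, m3, m4⟩ | ⟨m1, m2, m3⟩ | ⟨m1, m2, m3, m4⟩ | ⟨m1, m2, m3, m4⟩ |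
    ⟨m1, m2, m3, m4, m5, m6⟩
  · exfalso
    have hf2 := hF2 m1 m2
    obtain ⟨a, ha⟩ : ∃ f, (F c u1).card = f + 1 := ⟨(F c u1).card - 1, by omega⟩
    obtain ⟨d, hd⟩ : ∃ f, (F c u3).card = f + 1 := ⟨(F c u3).card - 1, by omega⟩
    obtain ⟨b, hb⟩ : ∃ f, (F c u2).card = f + 2 := ⟨(F c u2).card - 2, by omega⟩
    obtain ⟨l1, l1'⟩ := h.leg he hx t hl hlt a ha
    obtain ⟨l3, l3'⟩ := h.swap.leg he hx t hl hlt d hd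
    rw [← m1] at l3'
    rw [hb] at m3
    have ec : (((b + 2 : ℕ) : ℝ) - 1) = (b + 1 : ℕ) := by push_cast; ring
    rw [ec, hlt] at m3
    have hpos : 0 < t + 1 - (b + 1 : ℕ) := by
      have := mul_pos hl (hx q)
      rw [← m3] at this
      exact pos_of_mul_pos_left this (hx u2).le
    refine hmin a b d (by omega) (num_tripod t ht a b d hpos l1 l3 ?_)
    have k : (t + 1) / (t + 1 - (b + 1 : ℕ)) = lam * x u2 / x q := by
      rw [div_eq_div_iff hpos.ne' (hx q).ne', ← hlt]
      have : lam ^ 2 * x q = lam * (lam * x q) := by ring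
      rw [this, ← m3, hlt]; ring
    rw [k]
    have tot : lam * x u2 / x q + lam * x p / x q + lam * x s / x q = t + 1 := by
      rw [← add_div, ← add_div, div_eq_iff (hx q).ne', ← hlt]
      have : lam ^ 2 * x q = lam * (lam * x q) := by ring
      rw [this, m4]; ring
    linarith
  · exfalso
    have := br_combine t _ _ ht _ _ (F c u2).card _ _ _ hn (by rw [hcard]; simp only [m1, m2, if_true]; ring)
      (B1 (fun e => absurd m1 e)) (B3 (fun e => absurd m2 e)) (by
        simp only [m1, m2, if_true]
        rw [← add_div, eq_div_iff h2.ne', ← hlt]; exact m3) hmin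
    exact this.1.2 m1
  · exfalso
    have h1 : 1 ≤ (F c u2).card := Finset.card_pos.2 ⟨q, by rw [mem_F]; exact ⟨m1, h.cq⟩⟩
    have := br_combine t _ _ ht _ _ ((F c u2).card - 1) _ _ _ hn
      (by rw [hcard]; simp only [m1, m2, if_true, if_false]; omega)
      (B1 (fun e => m4)) (B3 (fun e => absurd m2 e)) (by
        simp only [m1, m2, if_true, if_false]
        rw [← add_div, eq_div_iff h2.ne', ← hlt]; push_cast [h1]; exact m3) hmin
    exact this.2.1.2 m2
  · exfalso
    have h1 : 1 ≤ (F c u2).card := Finset.card_pos.2 ⟨r, by rw [mem_F]; exact ⟨m2, h.cr⟩⟩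
    have := br_combine t _ _ ht _ _ ((F c u2).card - 1) _ _ _ hn
      (by rw [hcard]; simp only [m1, m2, if_true, if_false]; omega)
      (B1 (fun e => absurd m1 e)) (B3 (fun e => m4)) (by
        simp only [m1, m2, if_true, if_false]
        rw [← add_div, eq_div_iff h2.ne', ← hlt]; push_cast [h1]; exact m3) hmin
    exact this.1.2 m1
  · have h1 : 2 ≤ (F c u2).card := by
      rw [← Finset.card_pair m1]
      apply Finset.card_le_card
      intro v hv
      rw [Finset.mem_insert, Finset.mem_singleton] at hv
      rw [mem_F]
      rcases hv with rfl | rfl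
      · exact ⟨m2, h.cq⟩
      · exact ⟨m3, h.cr⟩
    have := br_combine t _ _ ht _ _ ((F c u2).card - 2) _ _ _ hn
      (by rw [hcard]; simp only [m2, m3, if_false]; omega)
      (B1 (fun e => m5)) (B3 (fun e => m6)) (by
        simp only [m2, m3, if_false]
        rw [← add_div, eq_div_iff h2.ne', ← hlt]; push_cast [h1]; exact m4) hmin
    simp only [m2, m3, if_false] at this
    exact ⟨this.1.1, m2, m3, this.2.1.1, m1, by omega, by omega⟩

end IsTri

theorem cut_edge {V : Type*} (G : SimpleGraph V) (hG : G.Connected) (S : Set V) (a b : V)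
    (ha : a ∈ S) (hb : b ∉ S) : ∃ x ∈ S, ∃ y, y ∉ S ∧ G.Adj x y := by
  obtain ⟨w⟩ := hG.preconnected a b
  obtain ⟨d, _, h1, h2⟩ := w.exists_boundary_dart S ha hb
  exact ⟨d.fst, h1, d.snd, h2, d.adj⟩

/-- A minimum dominating set all of whose vertices have at least two neighbours. -/
theorem exists_good_dom {V : Type*} [Fintype V] [DecidableEq V] (G : SimpleGraph V)
    (hG : G.Connected) (hd : domNum G = 3) (hn : 4 ≤ Fintype.card V) :
    ∃ D : Finset V, IsDomSet G D ∧ D.card = 3 ∧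
      ∀ u ∈ D, ∃ y z, y ≠ z ∧ G.Adj u y ∧ G.Adj u z := by
  classical
  obtain ⟨⟨D0, hD0, hc0⟩, hlow⟩ := domNum_three_spec G hd
  obtain ⟨D, hD, hmax⟩ := Finset.exists_max_image
    (Finset.univ.filter (fun D : Finset V => IsDomSet G D ∧ D.card = 3))
    (fun D => ∑ u ∈ D, G.degree u) ⟨D0, by simp [hD0, hc0]⟩
  simp only [Finset.mem_filter, Finset.mem_univ, true_and] at hD hmax
  refine ⟨D, hD.1, hD.2, ?_⟩
  intro u hu
  by_contra hcon
  push Not at hcon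
  have hsmall : ∀ S : Finset V, S.card ≤ 3 → ∃ b, b ∉ (S : Set V) := by
    intro S hS
    by_contra hno
    push Not at hno
    have : S = Finset.univ := by ext v; simpa using hno v
    rw [this, Finset.card_univ] at hS
    omega
  obtain ⟨b0, hb0⟩ := hsmall {u} (by simp)
  obtain ⟨u', hu', z, hz, huz⟩ := cut_edge G hG _ u b0 (by simp) hb0
  simp only [Finset.coe_singleton, Set.mem_singleton_iff] at hu' hz
  subst hu'
  have huniq : ∀ y, G.Adj u' y → y = z := by
    intro y hy
    by_contra hne
    exact hcon y z hne hy huz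
  by_cases hzD : z ∈ D
  · have := hlow (D.erase u') (by
      intro v hv
      by_cases hvu : v = u'
      · subst hvu
        exact ⟨z, Finset.mem_erase.2 ⟨hz, hzD⟩, huz.symm⟩
      · have hvD : v ∉ D := fun hvD => hv (Finset.mem_erase.2 ⟨hvu, hvD⟩)
        obtain ⟨w, hw, hwv⟩ := hD.1 v hvD
        refine ⟨w, Finset.mem_erase.2 ⟨?_, hw⟩, hwv⟩
        rintro rfl
        rw [huniq v hwv] at hvD
        exact hvD hzD)
    rw [Finset.card_erase_of_mem hu] at this
    omega
  · have hz' : z ∉ D.erase u' := fun h => hzD (Finset.mem_of_mem_erase h)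
    have := hmax (insert z (D.erase u')) ⟨by
      intro v hv
      rw [Finset.mem_insert, Finset.mem_erase] at hv
      push Not at hv
      by_cases hvu : v = u'
      · subst hvu
        exact ⟨z, Finset.mem_insert_self _ _, huz.symm⟩
      · have hvD := hv.2 hvu
        obtain ⟨w, hw, hwv⟩ := hD.1 v hvD
        refine ⟨w, Finset.mem_insert_of_mem (Finset.mem_erase.2 ⟨?_, hw⟩), hwv⟩
        rintro rfl
        exact hv.1 (huniq v hwv), by
      rw [Finset.card_insert_of_notMem hz', Finset.card_erase_of_mem hu]
      omega⟩
    rw [Finset.sum_insert hz', ← Finset.add_sum_erase _ _ hu] at this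
    have hdu : G.degree u' ≤ 1 := by
      rw [← G.card_neighborFinset_eq_degree, Finset.card_le_one]
      intro y hy y' hy'
      rw [mem_neighborFinset] at hy hy'
      rw [huniq y hy, huniq y' hy']
    have hdz : 2 ≤ G.degree z := by
      obtain ⟨b1, hb1⟩ := hsmall {u', z} (Finset.card_le_two.trans (by norm_num))
      obtain ⟨x, hx, y, hy, hxy⟩ := cut_edge G hG _ u' b1 (by simp) hb1
      simp only [Finset.coe_insert, Finset.coe_singleton, Set.mem_insert_iff,
        Set.mem_singleton_iff] at hx hy
      push Not at hy
      rcases hx with rfl | rfl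
      · exact absurd (huniq y hxy) hy.2
      · rw [← G.card_neighborFinset_eq_degree, ← Finset.card_pair hy.1]
        apply Finset.card_le_card
        intro w hw
        rw [Finset.mem_insert, Finset.mem_singleton] at hw
        rw [mem_neighborFinset]
        rcases hw with rfl | rfl
        · exact hxy
        · exact huz.symm
    omega

/-- Three stars joined by two edges. -/
def triGraph {V : Type*} (c : V → V) (p q r s : V) : SimpleGraph V where
  Adj x y := (x ≠ y ∧ (c x = y ∨ c y = x)) ∨ (x ≠ y ∧ ((x = p ∧ y = q) ∨ (x = q ∧ y = p) ∨
    (x = r ∧ y = s) ∨ (x = s ∧ y = r)))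
  symm := ⟨fun x y h => by
    rcases h with ⟨h1, h2⟩ | ⟨h1, h2⟩
    · exact Or.inl ⟨h1.symm, h2.symm⟩
    · refine Or.inr ⟨h1.symm, ?_⟩
      tauto⟩
  loopless := ⟨fun x h => by
    rcases h with ⟨h1, _⟩ | ⟨h1, _⟩ <;> exact h1 rfl⟩

theorem tri_of_edges {V : Type*} [Fintype V] [DecidableEq V] (G : SimpleGraph V)
    (hd : domNum G = 3)
    (hmin : ∀ H : SimpleGraph V, H ≤ G → H.Connected → domNum H = 3 → H = G)
    (c : V → V) (u1 u2 u3 p q r s : V) (h12 : u1 ≠ u2) (h13 : u1 ≠ u3) (h23 : u2 ≠ u3)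
    (cov : ∀ v, c v = u1 ∨ c v = u2 ∨ c v = u3)
    (c1 : c u1 = u1) (c2 : c u2 = u2) (c3 : c u3 = u3)
    (hc : ∀ v, c v ≠ v → G.Adj (c v) v)
    (cp : c p = u1) (cq : c q = u2) (cr : c r = u2) (cs : c s = u3)
    (hpq : G.Adj p q) (hrs : G.Adj r s) : IsTri G c u1 u2 u3 p q r s := by
  have hle : triGraph c p q r s ≤ G := by
    intro x y hxy
    rcases hxy with ⟨h1, h | h⟩ | ⟨h1, ⟨rfl, rfl⟩ | ⟨rfl, rfl⟩ | ⟨rfl, rfl⟩ | ⟨rfl, rfl⟩⟩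
    · subst h; exact (hc x h1.symm).symm
    · subst h; exact hc y h1
    · exact hpq
    · exact hpq.symm
    · exact hrs
    · exact hrs.symm
  have hvc : ∀ v, (triGraph c p q r s).Reachable v (c v) := by
    intro v
    by_cases h : v = c v
    · rw [← h]
    · exact Adj.reachable (Or.inl ⟨h, Or.inl rfl⟩)
  have hpq' : (triGraph c p q r s).Adj p q := Or.inr ⟨hpq.ne, by tauto⟩
  have hrs' : (triGraph c p q r s).Adj r s := Or.inr ⟨hrs.ne, by tauto⟩
  have e12 : (triGraph c p q r s).Reachable u1 u2 := by
    have := (hvc p).symm.trans (hpq'.reachable.trans (hvc q))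
    rwa [cp, cq] at this
  have e23 : (triGraph c p q r s).Reachable u2 u3 := by
    have := (hvc r).symm.trans (hrs'.reachable.trans (hvc s))
    rwa [cr, cs] at this
  have hall : ∀ v, (triGraph c p q r s).Reachable v u2 := by
    intro v
    have := hvc v
    rcases cov v with e | e | e <;> rw [e] at this
    · exact this.trans e12
    · exact this
    · exact this.trans e23.symm
  have hconn : (triGraph c p q r s).Connected :=
    { preconnected := fun a b => (hall a).trans (hall b).symm
      nonempty := ⟨u1⟩ }
  have hdom : domNum (triGraph c p q r s) = 3 := by
    obtain ⟨-, hlow⟩ := domNum_three_spec G hd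
    apply domNum_eq_three _ {u1, u2, u3}
    · intro v hv
      simp only [Finset.mem_insert, Finset.mem_singleton] at hv
      refine ⟨c v, ?_, ?_⟩
      · simpa using cov v
      · refine Or.inl ⟨?_, Or.inr rfl⟩
        intro e
        have := cov v
        rw [e] at this
        exact hv this
    · rw [Finset.card_eq_three]
      exact ⟨u1, u2, u3, h12, h13, h23, rfl⟩
    · intro D' hD'
      apply hlow
      intro v hv
      obtain ⟨u, hu, huv⟩ := hD' v hv
      exact ⟨u, hu, hle huv⟩
  have hEq := hmin _ hle hconn hdom
  refine ⟨h12, h13, h23, cov, c1, c2, c3, cp, cq, cr, cs, ?_⟩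
  intro x y
  constructor
  · intro h
    rw [← hEq] at h
    rcases h with h | ⟨_, h⟩
    · exact Or.inl h
    · exact Or.inr h
  · rintro (h | h)
    · rw [← hEq]; exact Or.inl h
    · rcases h with ⟨rfl, rfl⟩ | ⟨rfl, rfl⟩ | ⟨rfl, rfl⟩ | ⟨rfl, rfl⟩
      · exact hpq
      · exact hpq.symm
      · exact hrs
      · exact hrs.symm

theorem exists_tri {V : Type*} [Fintype V] [DecidableEq V] (G : SimpleGraph V)
    (hG : G.Connected) (hd : domNum G = 3) (hn : 4 ≤ Fintype.card V)
    (hmin : ∀ H : SimpleGraph V, H ≤ G → H.Connected → domNum H = 3 → H = G) :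
    ∃ c u1 u2 u3 p q r s, IsTri G c u1 u2 u3 p q r s ∧
      ∀ u, c u = u → ∃ y z, y ≠ z ∧ G.Adj u y ∧ G.Adj u z := by
  classical
  obtain ⟨D, hD, hcard, hnb⟩ := exists_good_dom G hG hd hn
  have : ∀ v, ∃ u ∈ D, (v ∈ D → u = v) ∧ (v ∉ D → G.Adj u v) := by
    intro v
    by_cases hv : v ∈ D
    · exact ⟨v, hv, fun _ => rfl, fun h => absurd hv h⟩
    · obtain ⟨u, hu, h⟩ := hD v hv
      exact ⟨u, hu, fun h' => absurd h' hv, fun _ => h⟩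
  choose c hcD hc1 hc2 using this
  obtain ⟨a, b, d, hab, had, hbd, rfl⟩ := Finset.card_eq_three.1 hcard
  simp only [Finset.mem_insert, Finset.mem_singleton] at hcD hc1 hc2 hnb
  have hca := hc1 a (by tauto)
  have hcb := hc1 b (by tauto)
  have hcd := hc1 d (by tauto)
  have hcadj : ∀ v, c v ≠ v → G.Adj (c v) v := by
    intro v hv
    apply hc2
    rintro (rfl | rfl | rfl) <;> contradiction
  have hnb' : ∀ u, c u = u → ∃ y z, y ≠ z ∧ G.Adj u y ∧ G.Adj u z := by
    intro u hu
    apply hnb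
    have := hcD u
    rwa [hu] at this
  -- edges leaving the classes
  have out : ∀ u u', c u = u → c u' = u' → u ≠ u' →
      ∃ x y, c x = u ∧ c y ≠ u ∧ G.Adj x y := by
    intro u u' hu hu' hne
    obtain ⟨x, hx, y, hy, hxy⟩ := cut_edge G hG {v | c v = u} u u' hu
      (by simp only [Set.mem_ofPred_eq, hu']; exact hne.symm)
    exact ⟨x, y, hx, hy, hxy⟩
  have main : ∀ u1 u2 u3 p q r s, u1 ≠ u2 → u1 ≠ u3 → u2 ≠ u3 →
      (∀ v, c v = u1 ∨ c v = u2 ∨ c v = u3) → c u1 = u1 → c u2 = u2 → c u3 = u3 →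
      c p = u1 → c q = u2 → c r = u2 → c s = u3 → G.Adj p q → G.Adj r s → 
      ∃ c u1 u2 u3 p q r s, IsTri G c u1 u2 u3 p q r s ∧
      ∀ u, c u = u → ∃ y z, y ≠ z ∧ G.Adj u y ∧ G.Adj u z := by
    intro u1 u2 u3 p q r s h12 h13 h23 cov c1 c2 c3 cp cq cr cs hpq hrs
    exact ⟨c, u1, u2, u3, p, q, r, s, tri_of_edges G hd hmin c u1 u2 u3 p q r s h12 h13 h23 cov
      c1 c2 c3 hcadj cp cq cr cs hpq hrs, hnb'⟩
  obtain ⟨x, y, hx, hy, hxy⟩ := out a b hca hcb hab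
  rcases hcD y with h | h | h
  · exact absurd h hy
  · -- edge a-b, then from d
    obtain ⟨x', y', hx', hy', hxy'⟩ := out d a hcd hca had.symm
    rcases hcD y' with h' | h' | h'
    · exact main b a d y x y' x' hab.symm hbd had (fun v => by have := hcD v; tauto) hcb hca hcd
        h hx h' hx' hxy.symm hxy'.symm
    · exact main a b d x y y' x' hab had hbd hcD hca hcb hcd hx h h' hx' hxy hxy'.symm
    · exact absurd h' hy'
  · -- edge a-d, then from b
    obtain ⟨x', y', hx', hy', hxy'⟩ := out b a hcb hca hab.symm
    rcases hcD y' with h' | h' | h'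
    · exact main d a b y x y' x' had.symm hbd.symm hab (fun v => by have := hcD v; tauto)
        hcd hca hcb h hx h' hx' hxy.symm hxy'.symm
    · exact absurd h' hy'
    · exact main a d b x y y' x' had hab hbd.symm (fun v => by have := hcD v; tauto)
        hca hcd hcb hx h h' hx' hxy hxy'.symm

theorem IsTri.iso_G2 {V : Type*} [Fintype V] [DecidableEq V] {G : SimpleGraph V} {c : V → V}
    {u1 u2 u3 p q r s : V} (h : IsTri G c u1 u2 u3 p q r s)
    (hmin : ∀ H : SimpleGraph V, H ≤ G → H.Connected → domNum H = 3 → H = G)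
    (hp : p ≠ u1) (hq : q ≠ u2) (hr : r ≠ u2) (hs : s ≠ u3) (hqr : q ≠ r)
    (a b d : ℕ) (ha : (IsTri.F c u1).card = a + 1) (hb : (IsTri.F c u2).card = b + 2)
    (hd : (IsTri.F c u3).card = d + 1) : Nonempty (G ≃g G2graph a b d) := by
  have pm : p ∈ IsTri.F c u1 := by rw [IsTri.mem_F]; exact ⟨hp, h.cp⟩
  have qm : q ∈ IsTri.F c u2 := by rw [IsTri.mem_F]; exact ⟨hq, h.cq⟩
  have rm : r ∈ (IsTri.F c u2).erase q := by
    rw [Finset.mem_erase, IsTri.mem_F]; exact ⟨hqr.symm, hr, h.cr⟩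
  have sm : s ∈ IsTri.F c u3 := by rw [IsTri.mem_F]; exact ⟨hs, h.cs⟩
  have k1 : ((IsTri.F c u1).erase p).card = a := by rw [Finset.card_erase_of_mem pm]; omega
  have k2 : (((IsTri.F c u2).erase q).erase r).card = b := by
    rw [Finset.card_erase_of_mem rm, Finset.card_erase_of_mem qm]; omega
  have k3 : ((IsTri.F c u3).erase s).card = d := by rw [Finset.card_erase_of_mem sm]; omega
  let e1 := (Finset.equivFinOfCardEq k1).symm
  let e2 := (Finset.equivFinOfCardEq k2).symm
  let e3 := (Finset.equivFinOfCardEq k3).symm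
  have m1 : ∀ j, (e1 j : V) ≠ u1 ∧ c (e1 j) = u1 := fun j => by
    have := (e1 j).2
    rw [Finset.mem_erase, IsTri.mem_F] at this
    exact this.2
  have m2 : ∀ j, (e2 j : V) ≠ u2 ∧ c (e2 j) = u2 := fun j => by
    have := (e2 j).2
    rw [Finset.mem_erase, Finset.mem_erase, IsTri.mem_F] at this
    exact this.2.2
  have m3 : ∀ j, (e3 j : V) ≠ u3 ∧ c (e3 j) = u3 := fun j => by
    have := (e3 j).2
    rw [Finset.mem_erase, IsTri.mem_F] at this
    exact this.2
  let g : Fin 7 ⊕ (Fin a ⊕ Fin b ⊕ Fin d) → V :=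
    Sum.elim ![u1, p, q, u2, r, s, u3]
      (Sum.elim (fun j => (e1 j : V)) (Sum.elim (fun j => (e2 j : V)) (fun j => (e3 j : V))))
  have gsurj : Function.Surjective g := by
    intro v
    rcases h.cov v with e | e | e
    · by_cases h1 : v = u1
      · exact ⟨Sum.inl 0, h1.symm⟩
      by_cases h2 : v = p
      · exact ⟨Sum.inl 1, h2.symm⟩
      have hv : v ∈ (IsTri.F c u1).erase p := by
        rw [Finset.mem_erase, IsTri.mem_F]; exact ⟨h2, h1, e⟩
      exact ⟨Sum.inr (Sum.inl (e1.symm ⟨v, hv⟩)), by simp [g]⟩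
    · by_cases h1 : v = u2
      · exact ⟨Sum.inl 3, h1.symm⟩
      by_cases h2 : v = q
      · exact ⟨Sum.inl 2, h2.symm⟩
      by_cases h3 : v = r
      · exact ⟨Sum.inl 4, h3.symm⟩
      have hv : v ∈ ((IsTri.F c u2).erase q).erase r := by
        rw [Finset.mem_erase, Finset.mem_erase, IsTri.mem_F]; exact ⟨h3, h2, h1, e⟩
      exact ⟨Sum.inr (Sum.inr (Sum.inl (e2.symm ⟨v, hv⟩))), by simp [g]⟩
    · by_cases h1 : v = u3
      · exact ⟨Sum.inl 6, h1.symm⟩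
      by_cases h2 : v = s
      · exact ⟨Sum.inl 5, h2.symm⟩
      have hv : v ∈ (IsTri.F c u3).erase s := by
        rw [Finset.mem_erase, IsTri.mem_F]; exact ⟨h2, h1, e⟩
      exact ⟨Sum.inr (Sum.inr (Sum.inr (e3.symm ⟨v, hv⟩))), by simp [g]⟩
  have gbij : Function.Bijective g := by
    rw [Fintype.bijective_iff_surjective_and_card]
    refine ⟨gsurj, ?_⟩
    rw [h.card_eq, ha, hb, hd]
    simp only [Fintype.card_sum, Fintype.card_fin]
    omega
  let E := Equiv.ofBijective g gbij
  have star : ∀ w u, w ≠ u → c w = u → G.Adj u w := by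
    intro w u h1 h2
    rw [h.adj]
    exact Or.inl ⟨h1.symm, Or.inr h2⟩
  have hpq : G.Adj p q := by rw [h.adj]; tauto
  have hrs : G.Adj r s := by rw [h.adj]; tauto
  have hom : ∀ x y, (G2graph a b d).Adj x y → G.Adj (g x) (g y) := by
    have half : ∀ x y, ((x = Sum.inl 0 ∧ y = Sum.inl 1) ∨
        (x = Sum.inl 1 ∧ y = Sum.inl 2) ∨
        (x = Sum.inl 2 ∧ y = Sum.inl 3) ∨
        (x = Sum.inl 3 ∧ y = Sum.inl 4) ∨
        (x = Sum.inl 4 ∧ y = Sum.inl 5) ∨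
        (x = Sum.inl 5 ∧ y = Sum.inl 6) ∨
        (∃ j : Fin a, x = Sum.inl 0 ∧ y = Sum.inr (Sum.inl j)) ∨
        (∃ j : Fin b, x = Sum.inl 3 ∧ y = Sum.inr (Sum.inr (Sum.inl j))) ∨
        (∃ j : Fin d, x = Sum.inl 6 ∧ y = Sum.inr (Sum.inr (Sum.inr j)))) → 
        G.Adj (g x) (g y) := by
      rintro x y (⟨rfl, rfl⟩ | ⟨rfl, rfl⟩ | ⟨rfl, rfl⟩ | ⟨rfl, rfl⟩ | ⟨rfl, rfl⟩ | ⟨rfl, rfl⟩ |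
        ⟨j, rfl, rfl⟩ | ⟨j, rfl, rfl⟩ | ⟨j, rfl, rfl⟩)
      · exact star p u1 hp h.cp
      · exact hpq
      · exact (star q u2 hq h.cq).symm
      · exact star r u2 hr h.cr
      · exact hrs
      · exact (star s u3 hs h.cs).symm
      · exact star _ _ (m1 j).1 (m1 j).2
      · exact star _ _ (m2 j).1 (m2 j).2
      · exact star _ _ (m3 j).1 (m3 j).2
    intro x y hxy
    rw [G2graph, SimpleGraph.fromRel_adj] at hxy
    rcases hxy.2 with h1 | h1
    · exact half x y h1
    · exact (half y x h1).symm
  let I : (G2graph a b d).comap E.symm ≃g G2graph a b d := SimpleGraph.Iso.comap E.symm _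
  have hEq : (G2graph a b d).comap E.symm = G := by
    apply hmin
    · intro x y hxy
      have := hom _ _ hxy
      have hg : ∀ v, g (E.symm v) = v := fun v => E.apply_symm_apply v
      rwa [hg, hg] at this
    · exact I.connected_iff.2 (G2_connected a b d)
    · rw [domNum_iso _ _ I]; exact G2_domNum a b d
  rw [← hEq]
  exact ⟨I⟩

theorem minimizer_domNum_three_balanced_form (n : ℕ) (hn : 11 ≤ n)
    (G : SimpleGraph (Fin n)) (hconn : G.Connected) (hdom : domNum G = 3)
    (hmin : ∀ H : SimpleGraph (Fin n), H.Connected → domNum H = 3 →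
      specRad G ≤ specRad H) :
    ∃ a : ℕ, 1 ≤ a ∧ 2 * a + 7 ≤ n ∧
      Nonempty (G ≃g G2graph a (n - 2 * a - 7) a) := by
  have hminle : ∀ H : SimpleGraph (Fin n), H ≤ G → H.Connected → domNum H = 3 → H = G := by
    intro H hle hc hd
    by_contra hne
    exact absurd (specRad_lt_of_lt H G hc (lt_of_le_of_ne hle hne)) (not_lt.2 (hmin H hc hd))
  obtain ⟨c, u1, u2, u3, p, q, r, s, h, hnb⟩ := exists_tri G hconn hdom (by simp; omega) hminle
  obtain ⟨x, hx, he⟩ := exists_perron G hconn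
  have hl : 0 < specRad G := by
    have hpq : G.Adj p q := by rw [h.adj]; tauto
    have h1 : adjMat G p q * x q ≤ ∑ w, adjMat G p w * x w :=
      Finset.single_le_sum (f := fun w => adjMat G p w * x w)
        (fun w _ => mul_nonneg (adjMat_nonneg G p w) (hx w).le) (Finset.mem_univ q)
    classical
    rw [he, adjMat_apply', if_pos hpq, one_mul] at h1
    exact pos_of_mul_pos_left (lt_of_lt_of_le (hx q) h1) (hx p).le
  have hF : ∀ u, c u = u → (∀ y, G.Adj u y → y ∈ IsTri.F c u) → 2 ≤ (IsTri.F c u).card := by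
    intro u hu hsub
    obtain ⟨y, z, hyz, hy, hz⟩ := hnb u hu
    rw [← Finset.card_pair hyz]
    apply Finset.card_le_card
    intro w hw
    rw [Finset.mem_insert, Finset.mem_singleton] at hw
    rcases hw with rfl | rfl
    · exact hsub _ hy
    · exact hsub _ hz
  have hEnd : ∀ u1 u2 u3 p q r s, IsTri G c u1 u2 u3 p q r s →
      (p ≠ u1 → 2 ≤ (IsTri.F c u1).card) ∧ 1 ≤ (IsTri.F c u1).card := by
    intro u1 u2 u3 p q r s h
    have hsub : ∀ y, G.Adj u1 y → y ∈ IsTri.F c u1 ∨ (p = u1 ∧ y = q) := by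
      intro y hy
      rw [h.adj] at hy
      rw [IsTri.mem_F]
      obtain ⟨h12, h13, h23, cov, c1, c2, c3, cp, cq, cr, cs, adj⟩ := h
      grind
    have hbig : p ≠ u1 → 2 ≤ (IsTri.F c u1).card := by
      intro hp
      apply hF u1 h.c1
      intro y hy
      rcases hsub y hy with h1 | h1
      · exact h1
      · exact absurd h1.1 hp
    refine ⟨hbig, ?_⟩
    obtain ⟨y, z, hyz, hy, hz⟩ := hnb u1 h.c1
    apply Finset.card_pos.2
    rcases hsub y hy with h1 | h1
    · exact ⟨y, h1⟩
    · rcases hsub z hz with h2 | h2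
      · exact ⟨z, h2⟩
      · exact absurd (h1.2.trans h2.2.symm) hyz
  have hMid : q = r → q ≠ u2 → 2 ≤ (IsTri.F c u2).card := by
    intro e1 e2
    apply hF u2 h.c2
    intro y hy
    rw [h.adj] at hy
    rw [IsTri.mem_F]
    obtain ⟨h12, h13, h23, cov, c1, c2, c3, cp, cq, cr, cs, adj⟩ := h
    grind
  have hUC : 0 < specRad G ^ 2 - 1 → ∀ a b d, a + b + d + 7 = Fintype.card (Fin n) → ¬ UC (specRad G ^ 2 - 1) a b d := by
    intro hs0 a b d habd hU
    rw [Fintype.card_fin] at habd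
    have hlt := G2_specRad_lt a b d (specRad G) (specRad G ^ 2 - 1) hl hs0 (by ring) hU.1 hU.2.1 hU.2.2
    have hcardeq : Fintype.card (Fin n) = Fintype.card (Fin 7 ⊕ (Fin a ⊕ Fin b ⊕ Fin d)) := by
      simp only [Fintype.card_sum, Fintype.card_fin]
      omega
    let E := Fintype.equivOfCardEq hcardeq
    let I : (G2graph a b d).comap E ≃g G2graph a b d := SimpleGraph.Iso.comap E _
    have := hmin _ (I.connected_iff.2 (G2_connected a b d))
      (by rw [domNum_iso _ _ I]; exact G2_domNum a b d)
    rw [specRad_iso _ _ I] at this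
    linarith
  obtain ⟨g1, g2, g3, g4, g5, g6, g7⟩ := h.analysis he hx hl (by simpa using hn)
    (hEnd _ _ _ _ _ _ _ h).2 (hEnd _ _ _ _ _ _ _ h).1 (hEnd _ _ _ _ _ _ _ h.swap).2
    (hEnd _ _ _ _ _ _ _ h.swap).1 hMid hUC
  have hcard := h.card_eq
  rw [Fintype.card_fin] at hcard
  have hF2 : 2 ≤ (IsTri.F c u2).card := by
    rw [← Finset.card_pair g5]
    apply Finset.card_le_card
    intro v hv
    rw [Finset.mem_insert, Finset.mem_singleton] at hv
    rw [IsTri.mem_F]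
    rcases hv with rfl | rfl
    · exact ⟨g2, h.cq⟩
    · exact ⟨g3, h.cr⟩
  refine ⟨(IsTri.F c u1).card - 1, by omega, by omega, ?_⟩
  exact h.iso_G2 hminle g1 g2 g3 g4 g5 _ _ _ (by omega) (by omega) (by omega)
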